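/- arXiv:1710.01350 — 3 statements merged into one kernel-verified Lean document; each statement's English description precedes it below -/
import Mathlib

section
/- For every integer u ≥ 0 and every finite abelian p-group A, the sum over isomorphism classes of finite abelian p-groups B of |Sur(B,A)| · μ^u(B) equals |A|^{-u}. -/
/-!
Cohen–Lenstra moments: for every integer `u ≥ 0` and every finite abelian `p`-group `A`,
the sum over isomorphism classes of finite abelian `p`-groups `B` of `|Sur(B,A)| · μ^u(B)`
equals `|A|^{-u}`.
-/

open scoped Classical

/-- The number of surjective group homomorphisms `B → A`. -/
noncomputable def numSur (B A : Type*) [AddCommGroup B] [AddCommGroup A] : ℕ :=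
  Nat.card {f : B →+ A // Function.Surjective f}

/-- The number of automorphisms of `A`. -/
noncomputable def numAut (A : Type*) [AddCommGroup A] : ℕ :=
  Nat.card (A ≃+ A)

/-- The infinite product `∏_{k=1}^∞ (1 - p^{-(k+u)})`. -/
noncomputable def clProd (p u : ℕ) : ℝ :=
  ∏' k : ℕ, (1 - (p : ℝ) ^ (-((k : ℤ) + 1 + u)))

/-- The Cohen–Lenstra measure `μ^u(A) = |A|^{-u} |Aut(A)|^{-1} ∏_{k=1}^∞ (1 - p^{-(k+u)})`. -/
noncomputable def clMeasure (p u : ℕ) (A : Type*) [AddCommGroup A] : ℝ :=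
  ((Nat.card A : ℝ) ^ u)⁻¹ * ((numAut A : ℝ))⁻¹ * clProd p u

/-- The finite abelian `p`-group `G_λ = ⨁_i ℤ/p^{λ_i}ℤ` associated to a partition `λ`,
a finite multiset of positive integers. -/
def CLGroup (p : ℕ) (lam : Multiset ℕ+) : Type :=
  ∀ i : Fin lam.toList.length, ZMod (p ^ ((lam.toList.get i : ℕ+) : ℕ))

noncomputable instance (p : ℕ) (lam : Multiset ℕ+) : AddCommGroup (CLGroup p lam) := by
  delta CLGroup; infer_instance

open scoped ENNReal

/-- Weight `m^{-s}` on powers of `p`, zero elsewhere. -/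
noncomputable def clW (p s m : ℕ) : ℝ≥0∞ :=
  if ∃ k : ℕ, m = p ^ k then ((m : ℝ≥0∞) ^ s)⁻¹ else 0

theorem clW_mul (p : ℕ) (hp : p.Prime) (s a b : ℕ) :
    clW p s (a * b) = clW p s a * clW p s b := by
  unfold clW
  by_cases ha : ∃ k : ℕ, a = p ^ k
  · by_cases hb : ∃ k : ℕ, b = p ^ k
    · have hab : ∃ k : ℕ, a * b = p ^ k := by
        obtain ⟨k, rfl⟩ := ha
        obtain ⟨l, rfl⟩ := hb
        exact ⟨k + l, (pow_add _ _ _).symm⟩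
      rw [if_pos ha, if_pos hb, if_pos hab]
      push_cast
      rw [mul_pow, ENNReal.mul_inv]
      · right; finiteness
      · left; finiteness
    · rw [if_neg hb, mul_zero, if_neg]
      rintro ⟨k, hk⟩
      exact hb (by
        obtain ⟨l, -, hl⟩ := (Nat.dvd_prime_pow hp).1 (Dvd.intro_left a hk)
        exact ⟨l, hl⟩)
  · rw [if_neg ha, zero_mul, if_neg]
    rintro ⟨k, hk⟩
    exact ha (by
      obtain ⟨l, -, hl⟩ := (Nat.dvd_prime_pow hp).1 (Dvd.intro b hk)
      exact ⟨l, hl⟩)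

theorem clW_zero (p : ℕ) (hp : p.Prime) (s : ℕ) : clW p s 0 = 0 := by
  unfold clW
  rw [if_neg]
  rintro ⟨k, hk⟩
  exact (pow_pos hp.pos k).ne hk

theorem clW_one (p : ℕ) (s : ℕ) : clW p s 1 = 1 := by
  unfold clW
  rw [if_pos ⟨0, by simp⟩]
  simp

theorem clW_succ (p : ℕ) (hp : p.Prime) (s m : ℕ) :
    (m : ℝ≥0∞) * clW p (s + 1) m = clW p s m := by
  unfold clW
  split_ifs with h
  · have hm : m ≠ 0 := by
      obtain ⟨k, rfl⟩ := h
      exact (pow_pos hp.pos k).ne'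
    rw [pow_succ', ENNReal.mul_inv (by right; finiteness) (by left; finiteness), ← mul_assoc,
      ENNReal.mul_inv_cancel (by exact_mod_cast hm) (by finiteness), one_mul]
  · simp

theorem clW_tsum (p : ℕ) (hp : p.Prime) (s : ℕ) :
    ∑' m : ℕ+, clW p s m = (1 - ((p : ℝ≥0∞) ^ s)⁻¹)⁻¹ := by
  rw [← ENNReal.tsum_geometric]
  obtain ⟨q, hq⟩ : ∃ q : ℕ → ℕ+, ∀ k, (q k : ℕ) = p ^ k :=
    ⟨fun k => ⟨p ^ k, pow_pos hp.pos k⟩, fun k => rfl⟩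
  have hinj : Function.Injective q := by
    intro a b hab
    refine Nat.pow_right_injective hp.two_le ?_
    simp only [← hq, hab]
  rw [← hinj.tsum_eq]
  · refine tsum_congr fun k => ?_
    unfold clW
    rw [if_pos ⟨k, hq k⟩, hq]
    push_cast
    rw [← ENNReal.inv_pow, ← pow_mul, ← pow_mul, mul_comm]
  · intro m hm
    rw [Function.mem_support] at hm
    unfold clW at hm
    simp only [ne_eq, ite_eq_right_iff, Classical.not_imp] at hm
    obtain ⟨⟨k, hk⟩, -⟩ := hm
    exact ⟨k, PNat.eq ((hq k).trans hk.symm)⟩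

/-- The zeta sum over subgroups. -/
noncomputable def clF (p s : ℕ) (M : Type) [AddCommGroup M] : ℝ≥0∞ :=
  ∑' L : AddSubgroup M, clW p s L.index

theorem clF_congr (p s : ℕ) {M N : Type} [AddCommGroup M] [AddCommGroup N] (e : M ≃+ N) :
    clF p s M = clF p s N := by
  unfold clF
  rw [← (e.mapAddSubgroup.toEquiv).tsum_eq]
  refine tsum_congr fun L => ?_
  congr 1
  exact (AddSubgroup.index_map_equiv L e).symm

theorem cl_index_prod {G : Type} [AddCommGroup G] (L : AddSubgroup (G × ℤ)) :
    L.index = (L.comap (AddMonoidHom.inl G ℤ)).index *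
      (L.map (AddMonoidHom.snd G ℤ)).index := by
  have h1 : (L.map (AddMonoidHom.snd G ℤ)).index = (L ⊔ (AddMonoidHom.inl G ℤ).range).index := by
    rw [AddSubgroup.index_map]
    have : (AddMonoidHom.snd G ℤ).range = ⊤ :=
      AddMonoidHom.range_eq_top.2 (fun z => ⟨(0, z), rfl⟩)
    rw [this, AddSubgroup.index_top, mul_one]
    congr 2
    ext ⟨x, z⟩
    simp [AddSubgroup.mem_prod, AddMonoidHom.mem_range, eq_comm]
  rw [h1, AddSubgroup.index_comap, sup_comm, ← AddSubgroup.relIndex_sup_right,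
    AddSubgroup.relIndex_mul_index le_sup_right]

/-- The subgroup of `G × ℤ` built from Hermite data. -/
def clPhi {G : Type} [AddCommGroup G] (d : Σ L : AddSubgroup G, ℕ+ × (G ⧸ L)) :
    AddSubgroup (G × ℤ) where
  carrier := {x | ∃ t : ℤ, x.2 = t * (d.2.1 : ℕ) ∧ (x.1 : G ⧸ d.1) = t • d.2.2}
  zero_mem' := ⟨0, by simp⟩
  add_mem' := by
    rintro ⟨x, z⟩ ⟨x', z'⟩ ⟨t, h1, h2⟩ ⟨t', h1', h2'⟩
    refine ⟨t + t', ?_, ?_⟩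
    · simp only at h1 h1'
      simp [h1, h1', add_mul]
    · simp only at h2 h2'
      simp [h2, h2', add_smul]
  neg_mem' := by
    rintro ⟨x, z⟩ ⟨t, h1, h2⟩
    refine ⟨-t, ?_, ?_⟩
    · simp only at h1
      simp [h1]
    · simp only at h2
      simp [h2]

theorem clPhi_comap {G : Type} [AddCommGroup G] (d : Σ L : AddSubgroup G, ℕ+ × (G ⧸ L)) :
    (clPhi d).comap (AddMonoidHom.inl G ℤ) = d.1 := by
  ext x
  constructor
  · rintro ⟨t, h1, h2⟩
    have ht : t = 0 := by
      simp only [AddMonoidHom.inl_apply] at h1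
      rcases mul_eq_zero.1 h1.symm with h | h
      · exact h
      · exact absurd h (by exact_mod_cast d.2.1.ne_zero)
    rw [ht, zero_smul] at h2
    exact (QuotientAddGroup.eq_zero_iff x).1 h2
  · intro hx
    exact ⟨0, by simp, by rw [zero_smul]; exact (QuotientAddGroup.eq_zero_iff x).2 hx⟩

theorem clPhi_map {G : Type} [AddCommGroup G] (d : Σ L : AddSubgroup G, ℕ+ × (G ⧸ L)) :
    (clPhi d).map (AddMonoidHom.snd G ℤ) = AddSubgroup.zmultiples ((d.2.1 : ℕ) : ℤ) := by
  ext z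
  rw [AddSubgroup.mem_zmultiples_iff]
  constructor
  · rintro ⟨⟨x, w⟩, ⟨t, h1, h2⟩, rfl⟩
    exact ⟨t, by simpa using h1.symm⟩
  · rintro ⟨t, rfl⟩
    obtain ⟨x, hx⟩ := QuotientAddGroup.mk_surjective (t • d.2.2)
    exact ⟨(x, t • ((d.2.1 : ℕ) : ℤ)), ⟨t, by simp, hx⟩, rfl⟩

theorem clPhi_index {G : Type} [AddCommGroup G] (d : Σ L : AddSubgroup G, ℕ+ × (G ⧸ L)) :
    (clPhi d).index = d.1.index * d.2.1 := by
  rw [cl_index_prod, clPhi_comap, clPhi_map, Int.index_zmultiples]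
  simp

theorem clPhi_inj {G : Type} [AddCommGroup G] :
    Function.Injective (clPhi (G := G)) := by
  rintro ⟨L, m, c⟩ ⟨L', m', c'⟩ h
  have h1 := clPhi_comap ⟨L, m, c⟩
  rw [h, clPhi_comap] at h1
  simp only at h1
  subst h1
  have h2 := clPhi_map ⟨L', m, c⟩
  rw [h, clPhi_map] at h2
  have h3 : m' = m := by
    have := congrArg AddSubgroup.index h2
    simp only [Int.index_zmultiples] at this
    apply PNat.eq
    simpa using this
  subst h3
  obtain ⟨x, hx⟩ := QuotientAddGroup.mk_surjective c
  have hmem : (x, ((m' : ℕ) : ℤ)) ∈ clPhi ⟨L', m', c⟩ := ⟨1, by simp, by simp [hx]⟩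
  rw [h] at hmem
  obtain ⟨t, h4, h5⟩ := hmem
  have hm : ((m' : ℕ) : ℤ) ≠ 0 := by exact_mod_cast m'.ne_zero
  have ht : t = 1 := by
    simp only at h4
    exact (mul_right_cancel₀ hm (by rw [one_mul]; exact h4)).symm
  rw [ht, one_smul] at h5
  simp only at h5
  rw [← hx, ← h5]

theorem clPhi_surj {G : Type} [AddCommGroup G] (L : AddSubgroup (G × ℤ)) (hL : L.index ≠ 0) :
    ∃ d, clPhi d = L := by
  obtain ⟨a, ha⟩ := Int.subgroup_cyclic (L.map (AddMonoidHom.snd G ℤ))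
  rw [← AddSubgroup.zmultiples_eq_closure, ← Int.zmultiples_natAbs] at ha
  have hm : a.natAbs ≠ 0 := by
    intro h0
    rw [cl_index_prod, ha, Int.index_zmultiples] at hL
    simp [h0] at hL
  have hmem : ((a.natAbs : ℕ) : ℤ) ∈ L.map (AddMonoidHom.snd G ℤ) := by
    rw [ha]; exact AddSubgroup.mem_zmultiples _
  obtain ⟨⟨x, z⟩, hx, hz⟩ := hmem
  simp only [AddMonoidHom.coe_snd] at hz
  subst hz
  refine ⟨⟨L.comap (AddMonoidHom.inl G ℤ), ⟨a.natAbs, Nat.pos_of_ne_zero hm⟩, (x : G ⧸ _)⟩, ?_⟩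
  have key : ∀ (y : G) (t : ℤ), (y : G ⧸ L.comap (AddMonoidHom.inl G ℤ)) = t • (x : G ⧸ _) ↔
      (y, t * (a.natAbs : ℤ)) ∈ L := by
    intro y t
    rw [← QuotientAddGroup.mk_zsmul, eq_comm, QuotientAddGroup.eq, AddSubgroup.mem_comap]
    have h1 : (y, t * (a.natAbs : ℤ)) = t • (x, (a.natAbs : ℤ)) +
        (AddMonoidHom.inl G ℤ) (-(t • x) + y) := by
      ext <;> simp
    rw [h1]
    exact (AddSubgroup.add_mem_cancel_left L (L.zsmul_mem hx t)).symm
  ext ⟨y, w⟩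
  constructor
  · rintro ⟨t, h1, h2⟩
    simp only [PNat.mk_coe] at h1
    rw [h1]
    exact (key y t).1 h2
  · intro hy
    have : w ∈ L.map (AddMonoidHom.snd G ℤ) := ⟨_, hy, rfl⟩
    rw [ha, AddSubgroup.mem_zmultiples_iff] at this
    obtain ⟨t, rfl⟩ := this
    exact ⟨t, by simp, (key y t).2 (by simpa using hy)⟩

theorem clF_prod (p : ℕ) (hp : p.Prime) (s : ℕ) (G : Type) [AddCommGroup G] :
    clF p (s + 1) (G × ℤ) = clF p s G * (1 - ((p : ℝ≥0∞) ^ (s + 1))⁻¹)⁻¹ := by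
  unfold clF
  rw [← (clPhi_inj (G := G)).tsum_eq, ENNReal.tsum_sigma', ← ENNReal.tsum_mul_right]
  · refine tsum_congr fun L => ?_
    simp only [clPhi_index, clW_mul p hp]
    rw [ENNReal.tsum_prod']
    simp only [ENNReal.tsum_const, ENNReal.tsum_mul_left]
    rw [clW_tsum p hp]
    by_cases h0 : L.index = 0
    · simp [h0, clW_zero p hp]
    · have : ENat.card (G ⧸ L) = L.index := by
        have : Finite (G ⧸ L) := Nat.finite_of_card_ne_zero h0
        rw [AddSubgroup.index, ENat.card_eq_coe_natCard]
      rw [this, ← clW_succ p hp s]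
      simp only [ENat.toENNReal_coe]
      ring
  · intro L hL
    rw [Function.mem_support] at hL
    have : L.index ≠ 0 := by
      intro h
      rw [h, clW_zero p hp] at hL
      exact hL rfl
    exact clPhi_surj L this

theorem clF_free (p : ℕ) (hp : p.Prime) (u n : ℕ) (M : Type) [AddCommGroup M]
    [Module.Free ℤ M] [Module.Finite ℤ M] (hM : Module.finrank ℤ M = n) :
    clF p (n + u) M = ∏ k ∈ Finset.range n, (1 - ((p : ℝ≥0∞) ^ (k + 1 + u))⁻¹)⁻¹ := by
  induction n generalizing M with
  | zero =>
    have : Subsingleton M := Module.finrank_zero_iff.1 hM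
    unfold clF
    have hs : ∀ L : AddSubgroup M, L.index = 1 := fun L => by
      rw [Subsingleton.elim L ⊤, AddSubgroup.index_top]
    simp only [hs, clW_one]
    simp
  | succ n ih =>
    have e : M ≃ₗ[ℤ] (Fin n → ℤ) × ℤ := LinearEquiv.ofFinrankEq _ _ (by simp [hM])
    rw [clF_congr p _ e.toAddEquiv, Finset.prod_range_succ,
      show n + 1 + u = (n + u) + 1 by ring, clF_prod p hp, ih (Fin n → ℤ) (by simp)]

theorem cl_card_subtype {α : Type} [Finite α] (P : α → Prop) :
    ((Nat.card {a // P a} : ℕ) : ℝ≥0∞) = ∑' a, if P a then 1 else 0 := by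
  have := Fintype.ofFinite α
  rw [tsum_fintype, Finset.sum_boole, Nat.card_eq_fintype_card, Fintype.card_subtype]

/-- Homs out of `ℤ^n` are tuples. -/
noncomputable def clHomEquiv (n : ℕ) (A : Type) [AddCommGroup A] :
    ((Fin n → ℤ) →+ A) ≃ (Fin n → A) :=
  (addMonoidHomLequivInt (A := Fin n → ℤ) (B := A) ℤ).toEquiv.trans
    ((Pi.basisFun ℤ (Fin n)).constr ℤ).symm.toEquiv

instance clHomFinite (n : ℕ) (A : Type) [AddCommGroup A] [Finite A] :
    Finite ((Fin n → ℤ) →+ A) := Finite.of_equiv _ (clHomEquiv n A).symm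

theorem cl_numSur_quot {M A : Type} [AddCommGroup M] [AddCommGroup A] [Finite (M →+ A)]
    (L : AddSubgroup M) : ((numSur (M ⧸ L) A : ℕ) : ℝ≥0∞) =
      ∑' φ : {f : M →+ A // Function.Surjective f}, if L ≤ φ.1.ker then 1 else 0 := by
  rw [← cl_card_subtype, numSur]
  congr 1
  refine Nat.card_congr ?_
  refine ⟨fun f => ⟨⟨f.1.comp (QuotientAddGroup.mk' L),
      f.2.comp (QuotientAddGroup.mk'_surjective L)⟩, ?_⟩,
    fun φ => ⟨QuotientAddGroup.lift L φ.1.1 φ.2, ?_⟩, ?_, ?_⟩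
  · intro x hx
    simp [AddMonoidHom.mem_ker, (QuotientAddGroup.eq_zero_iff x).2 hx]
  · intro a
    obtain ⟨x, hx⟩ := φ.1.2 a
    exact ⟨x, hx⟩
  · intro f
    ext x
    rfl
  · intro φ
    ext x
    rfl

theorem cl_sum_le {M : Type} [AddCommGroup M] (p : ℕ) (hp : p.Prime) (s : ℕ) (K : AddSubgroup M) :
    ∑' L : AddSubgroup M, (if L ≤ K then 1 else 0) * clW p s L.index =
      clW p s K.index * clF p s K := by
  have hinj : Function.Injective (fun N : AddSubgroup K => N.map K.subtype) :=
    AddSubgroup.map_injective K.subtype_injective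
  rw [← hinj.tsum_eq]
  · unfold clF
    rw [← ENNReal.tsum_mul_left]
    refine tsum_congr fun N => ?_
    rw [if_pos (AddSubgroup.map_subtype_le N), one_mul, AddSubgroup.index_map_subtype,
      clW_mul p hp, mul_comm]
  · intro L hL
    rw [Function.mem_support] at hL
    have h : L ≤ K := by
      by_contra h
      simp [h] at hL
    exact ⟨L.addSubgroupOf K, AddSubgroup.map_addSubgroupOf_eq_of_le h⟩

theorem clF_ker (p : ℕ) (hp : p.Prime) (u n : ℕ) (K : AddSubgroup (Fin n → ℤ))
    (hK : Finite ((Fin n → ℤ) ⧸ K)) :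
    clF p (n + u) K = ∏ k ∈ Finset.range n, (1 - ((p : ℝ≥0∞) ^ (k + 1 + u))⁻¹)⁻¹ := by
  have h1 : Module.finrank ℤ (AddSubgroup.toIntSubmodule K) = n := by
    have h2 : Finite ((Fin n → ℤ) ⧸ AddSubgroup.toIntSubmodule K) := hK
    rw [Submodule.finiteQuotient_iff] at h2
    rw [h2]; simp
  exact clF_free p hp u n (AddSubgroup.toIntSubmodule K) h1

theorem cl_quot_sum (p : ℕ) (hp : p.Prime) (u n : ℕ) (A : Type) [AddCommGroup A] [Finite A] :
    ∑' L : AddSubgroup (Fin n → ℤ), (numSur ((Fin n → ℤ) ⧸ L) A : ℝ≥0∞) * clW p (n + u) L.index =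
      numSur (Fin n → ℤ) A * (clW p (n + u) (Nat.card A) *
        ∏ k ∈ Finset.range n, (1 - ((p : ℝ≥0∞) ^ (k + 1 + u))⁻¹)⁻¹) := by
  simp only [cl_numSur_quot, ← ENNReal.tsum_mul_right]
  rw [ENNReal.tsum_comm]
  have : ∀ φ : {f : (Fin n → ℤ) →+ A // Function.Surjective f},
      ∑' L : AddSubgroup (Fin n → ℤ), (if L ≤ φ.1.ker then 1 else 0) * clW p (n + u) L.index =
      clW p (n + u) (Nat.card A) *
        ∏ k ∈ Finset.range n, (1 - ((p : ℝ≥0∞) ^ (k + 1 + u))⁻¹)⁻¹ := by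
    intro φ
    have e := QuotientAddGroup.quotientKerEquivOfSurjective φ.1 φ.2
    rw [cl_sum_le p hp, clF_ker p hp u n _ (Finite.of_equiv _ e.symm.toEquiv)]
    congr 2
    exact Nat.card_congr e.toEquiv
  simp only [this, ENNReal.tsum_const, numSur]
  rw [ENat.card_eq_coe_natCard]
  simp

instance clAutFinite (A : Type) [AddCommGroup A] [Finite A] : Finite (A ≃+ A) :=
  Finite.of_injective (fun e : A ≃+ A => (e : A → A)) DFunLike.coe_injective

theorem cl_numAut_ne (A : Type) [AddCommGroup A] [Finite A] : numAut A ≠ 0 :=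
  Nat.card_ne_zero.2 ⟨⟨AddEquiv.refl A⟩, inferInstance⟩

theorem cl_numSur_eq {M B : Type} [AddCommGroup M] [AddCommGroup B] [Finite B]
    [Finite (M →+ B)] : (numSur M B : ℝ≥0∞) =
      numAut B * ∑' L : AddSubgroup M, if Nonempty ((M ⧸ L) ≃+ B) then 1 else 0 := by
  have h1 : (numSur M B : ℝ≥0∞) = ∑' f : {f : M →+ B // Function.Surjective f}, 1 := by
    rw [ENNReal.tsum_const, ENat.card_eq_coe_natCard, numSur]; simp
  let g : (Σ L : AddSubgroup M, ((M ⧸ L) ≃+ B)) → {f : M →+ B // Function.Surjective f} :=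
    fun d => ⟨d.2.toAddMonoidHom.comp (QuotientAddGroup.mk' d.1),
      d.2.surjective.comp (QuotientAddGroup.mk'_surjective d.1)⟩
  have hg : Function.Bijective g := by
    constructor
    · rintro ⟨L, e⟩ ⟨L', e'⟩ h
      have h' : ∀ x : M, e (x : M ⧸ L) = e' (x : M ⧸ L') := fun x =>
        DFunLike.congr_fun (congrArg Subtype.val h) x
      have hL : L = L' := by
        ext x
        rw [← QuotientAddGroup.eq_zero_iff, ← QuotientAddGroup.eq_zero_iff (N := L'),
          ← e.map_eq_zero_iff, ← e'.map_eq_zero_iff, h']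
      subst hL
      congr 1
      ext q
      obtain ⟨x, rfl⟩ := QuotientAddGroup.mk_surjective q
      exact h' x
    · rintro ⟨f, hf⟩
      refine ⟨⟨f.ker, QuotientAddGroup.quotientKerEquivOfSurjective f hf⟩, ?_⟩
      apply Subtype.ext
      ext x
      rfl
  rw [h1, ← (Equiv.ofBijective g hg).tsum_eq, ENNReal.tsum_sigma', ← ENNReal.tsum_mul_left]
  refine tsum_congr fun L => ?_
  split_ifs with h
  · obtain ⟨e⟩ := h
    rw [mul_one, numAut]
    let E : ((M ⧸ L) ≃+ B) ≃ (B ≃+ B) :=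
      ⟨fun f => e.symm.trans f, fun f => e.trans f, fun f => by ext; simp, fun f => by ext; simp⟩
    rw [ENNReal.tsum_const, ENat.card_congr E, ENat.card_eq_coe_natCard]
    simp
  · have : IsEmpty ((M ⧸ L) ≃+ B) := not_nonempty_iff.1 h
    simp

theorem cl_numSur_congr {B B' A : Type} [AddCommGroup B] [AddCommGroup B'] [AddCommGroup A]
    (e : B ≃+ B') : numSur B A = numSur B' A := by
  unfold numSur
  refine Nat.card_congr ?_
  refine ⟨fun f => ⟨f.1.comp e.symm.toAddMonoidHom, f.2.comp e.symm.surjective⟩,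
    fun f => ⟨f.1.comp e.toAddMonoidHom, f.2.comp e.surjective⟩, fun f => ?_, fun f => ?_⟩
  · ext x; simp
  · ext x; simp

theorem cl_group_sum (p : ℕ) (hp : p.Prime) (s : ℕ) {ι : Type} (G : ι → Type)
    [∀ i, AddCommGroup (G i)] [∀ i, Finite (G i)]
    (M A : Type) [AddCommGroup M] [AddCommGroup A] [∀ i, Finite (M →+ G i)]
    (hcl : ∀ (Q : Type) [AddCommGroup Q], (∃ k, Nat.card Q = p ^ k) →
      ∃! i, Nonempty (Q ≃+ G i)) :
    ∑' i, (numSur (G i) A : ℝ≥0∞) * clW p s (Nat.card (G i)) * (numAut (G i) : ℝ≥0∞)⁻¹ *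
        numSur M (G i) =
      ∑' L : AddSubgroup M, (numSur (M ⧸ L) A : ℝ≥0∞) * clW p s L.index := by
  have h1 : ∀ i, (numSur (G i) A : ℝ≥0∞) * clW p s (Nat.card (G i)) *
      (numAut (G i) : ℝ≥0∞)⁻¹ * numSur M (G i) =
      ∑' L : AddSubgroup M, if Nonempty ((M ⧸ L) ≃+ G i) then
        (numSur (M ⧸ L) A : ℝ≥0∞) * clW p s L.index else 0 := by
    intro i
    rw [cl_numSur_eq (M := M) (B := G i), mul_assoc, ← mul_assoc _⁻¹, ENNReal.inv_mul_cancel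
      (by exact_mod_cast cl_numAut_ne (G i)) (by finiteness), one_mul, ← ENNReal.tsum_mul_left]
    refine tsum_congr fun L => ?_
    split_ifs with h
    · obtain ⟨e⟩ := h
      rw [cl_numSur_congr e, mul_one, AddSubgroup.index, Nat.card_congr e.toEquiv]
    · simp
  simp only [h1]
  rw [ENNReal.tsum_comm]
  refine tsum_congr fun L => ?_
  by_cases hL : ∃ k, L.index = p ^ k
  · obtain ⟨i, hi, huniq⟩ := hcl (M ⧸ L) hL
    rw [tsum_eq_single i, if_pos hi]
    intro j hj
    rw [if_neg]
    exact fun h => hj (huniq j h)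
  · have : clW p s L.index = 0 := by rw [clW, if_neg hL]
    simp [this]

theorem cl_exists_equiv {ι κ β : Type} [Fintype ι] [Fintype κ] (f : ι → β) (g : κ → β)
    (h : (Finset.univ : Finset ι).val.map f = (Finset.univ : Finset κ).val.map g) :
    ∃ σ : ι ≃ κ, f = g ∘ σ := by
  have hc : ∀ b, Nonempty ({i // f i = b} ≃ {k // g k = b}) := by
    intro b
    rw [← Fintype.card_eq, Fintype.card_subtype, Fintype.card_subtype]
    have h1 := congrArg (Multiset.count b) h
    rw [Multiset.count_map, Multiset.count_map] at h1
    simp only [eq_comm (a := b)] at h1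
    exact h1
  let c := fun b => (hc b).some
  refine ⟨(Equiv.sigmaFiberEquiv f).symm.trans ((Equiv.sigmaCongrRight c).trans
    (Equiv.sigmaFiberEquiv g)), ?_⟩
  ext i
  exact (c (f i) ⟨i, rfl⟩).2.symm

theorem cl_toList_map (lam : Multiset ℕ+) :
    (Finset.univ : Finset (Fin lam.toList.length)).val.map lam.toList.get = lam := by
  have h1 : (Finset.univ : Finset (Fin lam.toList.length)).val =
      (List.finRange lam.toList.length : Multiset _) := rfl
  rw [h1, Multiset.map_coe]
  have h2 : List.map lam.toList.get (List.finRange lam.toList.length) = lam.toList := by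
    simp
  rw [h2, Multiset.coe_toList]

theorem cl_exists (p : ℕ) (hp : p.Prime) (Q : Type) [AddCommGroup Q]
    (hQ : ∃ k, Nat.card Q = p ^ k) : ∃ lam, Nonempty (Q ≃+ CLGroup p lam) := by
  obtain ⟨k, hk⟩ := hQ
  have hfin : Finite Q := Nat.finite_of_card_ne_zero (by rw [hk]; exact (pow_pos hp.pos k).ne')
  obtain ⟨ι, hι, n, hn, ⟨e⟩⟩ := AddCommGroup.equiv_directSum_zmod_of_finite' Q
  have e2 := e.trans (DirectSum.addEquivProd (fun i => ZMod (n i)))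
  have hcard : ∏ i, n i = p ^ k := by
    rw [← hk, Nat.card_congr e2.toEquiv, Nat.card_pi]
    simp
  have hpow : ∀ i, ∃ a : ℕ+, n i = p ^ (a : ℕ) := by
    intro i
    have hd : n i ∣ p ^ k := hcard ▸ Finset.dvd_prod_of_mem n (Finset.mem_univ i)
    obtain ⟨l, -, hl⟩ := (Nat.dvd_prime_pow hp).1 hd
    have hl0 : 0 < l := by
      rcases Nat.eq_zero_or_pos l with h | h
      · have := hn i
        rw [hl, h] at this
        simp at this
      · exact h
    exact ⟨⟨l, hl0⟩, hl⟩
  choose a ha using hpow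
  obtain rfl : n = fun i => p ^ (a i : ℕ) := funext ha
  refine ⟨(Finset.univ : Finset ι).val.map a, ?_⟩
  obtain ⟨σ, hσ⟩ := cl_exists_equiv a ((Finset.univ : Finset ι).val.map a).toList.get
    (cl_toList_map _).symm
  have hσ' : ∀ i, ((Finset.univ : Finset ι).val.map a).toList.get (σ i) = a i :=
    fun i => (congrFun hσ i).symm
  generalize (Finset.univ : Finset ι).val.map a = lam at *
  subst hσ
  exact ⟨e2.trans (RingEquiv.piCongrLeft
    (fun j : Fin lam.toList.length => ZMod (p ^ ((lam.toList.get j : ℕ+) : ℕ))) σ).toAddEquiv⟩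

theorem cl_card_torsion (p : ℕ) (hp : p.Prime) (lam : Multiset ℕ+) (k : ℕ) :
    Nat.card {x : CLGroup p lam // (p ^ k) • x = 0} =
      p ^ (lam.map (fun a : ℕ+ => min (a : ℕ) k)).sum := by
  have e : {x : CLGroup p lam // (p ^ k) • x = 0} ≃
      ∀ i : Fin lam.toList.length,
        (nsmulAddMonoidHom (p ^ k) : ZMod (p ^ ((lam.toList.get i : ℕ+) : ℕ)) →+ _).ker :=
    ⟨fun x i => ⟨x.1 i, congrFun x.2 i⟩, fun y => ⟨fun i => (y i).1, funext fun i => (y i).2⟩,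
      fun x => rfl, fun y => rfl⟩
  rw [Nat.card_congr e, Nat.card_pi]
  have h1 : ∀ i : Fin lam.toList.length,
      Nat.card (nsmulAddMonoidHom (p ^ k) : ZMod (p ^ ((lam.toList.get i : ℕ+) : ℕ)) →+ _).ker =
      p ^ (min ((lam.toList.get i : ℕ+) : ℕ) k) := by
    intro i
    have : NeZero (p ^ ((lam.toList.get i : ℕ+) : ℕ)) := ⟨(pow_pos hp.pos _).ne'⟩
    rw [IsAddCyclic.card_nsmulAddMonoidHom_ker, Nat.card_zmod]
    rcases le_total ((lam.toList.get i : ℕ+) : ℕ) k with h | h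
    · rw [min_eq_left h, Nat.gcd_eq_left (pow_dvd_pow p h)]
    · rw [min_eq_right h, Nat.gcd_eq_right (pow_dvd_pow p h)]
  simp only [h1]
  rw [Finset.prod_pow_eq_pow_sum]
  congr 1
  conv_rhs => rw [← cl_toList_map lam]
  rw [Multiset.map_map]
  rfl

theorem cl_multiset_min (lam : Multiset ℕ+) (k : ℕ) :
    (lam.map (fun a : ℕ+ => min (a : ℕ) (k + 1))).sum =
      (lam.map (fun a : ℕ+ => min (a : ℕ) k)).sum + lam.countP (fun a : ℕ+ => k < (a : ℕ)) := by
  induction lam using Multiset.induction_on with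
  | empty => simp
  | cons a s ih =>
    simp only [Multiset.map_cons, Multiset.sum_cons, Multiset.countP_cons, ih]
    split_ifs <;> omega

theorem cl_multiset_count (lam : Multiset ℕ+) (a : ℕ+) :
    lam.countP (fun b : ℕ+ => (a : ℕ) - 1 < (b : ℕ)) =
      lam.countP (fun b : ℕ+ => (a : ℕ) < (b : ℕ)) + lam.count a := by
  induction lam using Multiset.induction_on with
  | empty => simp
  | cons b s ih =>
    simp only [Multiset.countP_cons, Multiset.count_cons, ih]
    have h1 := a.pos
    have h2 : a = b ↔ (a : ℕ) = b := PNat.coe_inj.symm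
    simp only [h2]
    split_ifs <;> omega

theorem cl_unique (p : ℕ) (hp : p.Prime) (lam mu : Multiset ℕ+)
    (e : CLGroup p lam ≃+ CLGroup p mu) : lam = mu := by
  have h1 : ∀ k : ℕ, (lam.map (fun a : ℕ+ => min (a : ℕ) k)).sum =
      (mu.map (fun a : ℕ+ => min (a : ℕ) k)).sum := by
    intro k
    apply Nat.pow_right_injective hp.two_le
    simp only
    rw [← cl_card_torsion p hp, ← cl_card_torsion p hp]
    refine Nat.card_congr (e.toEquiv.subtypeEquiv fun x => ?_)
    have : e.toEquiv x = e x := rfl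
    rw [this, ← map_nsmul, e.map_eq_zero_iff]
  have h2 : ∀ k : ℕ, lam.countP (fun a : ℕ+ => k < (a : ℕ)) =
      mu.countP (fun a : ℕ+ => k < (a : ℕ)) := by
    intro k
    have := cl_multiset_min lam k
    have := cl_multiset_min mu k
    have := h1 k
    have := h1 (k + 1)
    omega
  ext a
  have := cl_multiset_count lam a
  have := cl_multiset_count mu a
  have := h2 a
  have := h2 (a - 1)
  omega

instance clGroupFinite (p : ℕ) [hp : Fact p.Prime] (lam : Multiset ℕ+) :
    Finite (CLGroup p lam) := by
  have : ∀ i : Fin lam.toList.length, NeZero (p ^ ((lam.toList.get i : ℕ+) : ℕ)) :=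
    fun i => ⟨(pow_pos hp.out.pos _).ne'⟩
  unfold CLGroup
  infer_instance

theorem cl_card_group (p : ℕ) (lam : Multiset ℕ+) :
    ∃ k, Nat.card (CLGroup p lam) = p ^ k := by
  unfold CLGroup
  rw [Nat.card_pi]
  simp only [Nat.card_zmod]
  rw [Finset.prod_pow_eq_pow_sum]
  exact ⟨_, rfl⟩

theorem cl_classification (p : ℕ) (hp : p.Prime) (Q : Type) [AddCommGroup Q]
    (hQ : ∃ k, Nat.card Q = p ^ k) : ∃! lam, Nonempty (Q ≃+ CLGroup p lam) := by
  obtain ⟨lam, ⟨e⟩⟩ := cl_exists p hp Q hQ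
  exact ⟨lam, ⟨e⟩, fun mu ⟨e'⟩ => cl_unique p hp mu lam (e'.symm.trans e)⟩

theorem cl_card_hom (n : ℕ) (B : Type) [AddCommGroup B] :
    Nat.card ((Fin n → ℤ) →+ B) = Nat.card B ^ n := by
  rw [Nat.card_congr (clHomEquiv n B), Nat.card_fun]
  simp

theorem cl_numSur_le (n : ℕ) (B : Type) [AddCommGroup B] [Finite B] :
    numSur (Fin n → ℤ) B ≤ Nat.card B ^ n := by
  rw [← cl_card_hom]
  exact Nat.card_le_card_of_injective _ Subtype.val_injective

theorem cl_numSur_ge (n : ℕ) (B : Type) [AddCommGroup B] [Finite B]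
    [Fintype {H : AddSubgroup B // H ≠ ⊤}] :
    Nat.card B ^ n ≤ numSur (Fin n → ℤ) B +
      ∑ H : {H : AddSubgroup B // H ≠ ⊤}, Nat.card H.1 ^ n := by
  rw [← cl_card_hom]
  simp only [← cl_card_hom]
  rw [numSur, ← Nat.card_sigma, ← Nat.card_sum]
  refine Nat.card_le_card_of_surjective (fun x : {f : (Fin n → ℤ) →+ B // Function.Surjective f} ⊕
    (Σ H : {H : AddSubgroup B // H ≠ ⊤}, ((Fin n → ℤ) →+ H.1)) =>
      Sum.elim (fun f => f.1) (fun d => d.1.1.subtype.comp d.2) x) ?_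
  intro f
  by_cases hf : Function.Surjective f
  · exact ⟨Sum.inl ⟨f, hf⟩, rfl⟩
  · refine ⟨Sum.inr ⟨⟨f.range, fun h => hf (AddMonoidHom.range_eq_top.1 h)⟩, f.rangeRestrict⟩, ?_⟩
    ext
    rfl

open Filter Topology in
theorem cl_ratio_tendsto_real (B : Type) [AddCommGroup B] [Finite B] :
    Tendsto (fun n : ℕ => (numSur (Fin n → ℤ) B : ℝ) / (Nat.card B : ℝ) ^ n) atTop (𝓝 1) := by
  have hft : Fintype {H : AddSubgroup B // H ≠ ⊤} := Fintype.ofFinite _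
  have hB : (0 : ℝ) < Nat.card B := by exact_mod_cast Nat.card_pos
  have hlow : Tendsto (fun n : ℕ => 1 - ∑ H : {H : AddSubgroup B // H ≠ ⊤},
      ((Nat.card H.1 : ℝ) / Nat.card B) ^ n) atTop (𝓝 (1 - ∑ H : {H : AddSubgroup B // H ≠ ⊤}, 0)) := by
    refine tendsto_const_nhds.sub (tendsto_finsetSum _ fun H _ => ?_)
    refine tendsto_pow_atTop_nhds_zero_of_lt_one (by positivity) ?_
    rw [div_lt_one hB]
    have h1 : Nat.card H.1 ≤ Nat.card B := Nat.card_le_card_of_injective _ H.1.subtype_injective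
    have h2 : Nat.card H.1 ≠ Nat.card B := fun h => H.2 (AddSubgroup.eq_top_of_card_eq _ h)
    exact_mod_cast lt_of_le_of_ne h1 h2
  rw [Finset.sum_const_zero, sub_zero] at hlow
  refine tendsto_of_tendsto_of_tendsto_of_le_of_le hlow tendsto_const_nhds (fun n => ?_)
    (fun n => ?_)
  · have h : ((Nat.card B : ℝ)) ^ n ≤ numSur (Fin n → ℤ) B +
      ∑ H : {H : AddSubgroup B // H ≠ ⊤}, (Nat.card H.1 : ℝ) ^ n := by
      exact_mod_cast cl_numSur_ge n B
    simp only [div_pow]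
    rw [← Finset.sum_div, sub_le_iff_le_add, ← add_div, le_div_iff₀ (by positivity), one_mul]
    exact h
  · simp only
    rw [div_le_one (by positivity)]
    exact_mod_cast cl_numSur_le n B

/-- Proportion of surjective homs. -/
noncomputable def clR (n : ℕ) (B : Type) [AddCommGroup B] : ℝ≥0∞ :=
  (numSur (Fin n → ℤ) B : ℝ≥0∞) * ((Nat.card B : ℝ≥0∞) ^ n)⁻¹

open Filter Topology in
theorem clR_tendsto (B : Type) [AddCommGroup B] [Finite B] :
    Tendsto (fun n : ℕ => clR n B) atTop (𝓝 1) := by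
  have h := ENNReal.tendsto_ofReal (cl_ratio_tendsto_real B)
  rw [ENNReal.ofReal_one] at h
  refine h.congr fun n => ?_
  have hB : (0 : ℝ) < Nat.card B := by exact_mod_cast Nat.card_pos
  rw [clR, ENNReal.ofReal_div_of_pos (by positivity), div_eq_mul_inv,
    ENNReal.ofReal_natCast, ENNReal.ofReal_pow (by positivity), ENNReal.ofReal_natCast]

theorem clR_le (n : ℕ) (B : Type) [AddCommGroup B] [Finite B] : clR n B ≤ 1 := by
  rw [clR, ← div_eq_mul_inv]
  refine ENNReal.div_le_of_le_mul ?_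
  rw [one_mul]
  exact_mod_cast cl_numSur_le n B

theorem clW_numSur (p n u : ℕ) (B : Type) [AddCommGroup B] [Finite B]
    (hB : ∃ k, Nat.card B = p ^ k) :
    clW p (n + u) (Nat.card B) * numSur (Fin n → ℤ) B =
      ((Nat.card B : ℝ≥0∞) ^ u)⁻¹ * clR n B := by
  rw [clW, if_pos hB, clR, pow_add,
    ENNReal.mul_inv (by right; finiteness) (by left; finiteness)]
  ring

open Filter Topology in
theorem cl_prod_tendsto (p : ℕ) (hp : p.Prime) (u : ℕ) :
    0 < clProd p u ∧
    Tendsto (fun n : ℕ => ∏ k ∈ Finset.range n, (1 - ((p : ℝ≥0∞) ^ (k + 1 + u))⁻¹)⁻¹) atTop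
      (𝓝 (ENNReal.ofReal (clProd p u)⁻¹)) := by
  have hp1 : (1 : ℝ) < p := by exact_mod_cast hp.one_lt
  have hp0 : (0 : ℝ) < p := by linarith
  have heq : ∀ k : ℕ, (p : ℝ) ^ (-((k : ℤ) + 1 + u)) = ((p : ℝ) ^ (k + 1 + u))⁻¹ := by
    intro k
    rw [zpow_neg]
    congr 1
  have hlt : ∀ k : ℕ, ((p : ℝ) ^ (k + 1 + u))⁻¹ < 1 := fun k =>
    inv_lt_one_of_one_lt₀ (one_lt_pow₀ hp1 (by omega))
  have hsum : Summable (fun k : ℕ => ‖-((p : ℝ) ^ (k + 1 + u))⁻¹‖) := by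
    have h1 : Summable (fun k : ℕ => ((p : ℝ)⁻¹) ^ k * ((p : ℝ)⁻¹) ^ (1 + u)) :=
      (summable_geometric_of_lt_one (by positivity) (inv_lt_one_of_one_lt₀ hp1)).mul_right _
    refine h1.congr fun k => ?_
    rw [norm_neg, Real.norm_of_nonneg (by positivity), ← pow_add, inv_pow, add_assoc]
  have hcl : clProd p u = ∏' k : ℕ, (1 + -((p : ℝ) ^ (k + 1 + u))⁻¹) := by
    unfold clProd
    simp only [heq, sub_eq_add_neg]
  have hne : clProd p u ≠ 0 := by
    rw [hcl]
    exact tprod_one_add_ne_zero_of_summable (fun k => by linarith [hlt k] |> ne_of_gt) hsum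
  have ht : Tendsto (fun n : ℕ => ∏ k ∈ Finset.range n, (1 - ((p : ℝ) ^ (k + 1 + u))⁻¹)) atTop
      (𝓝 (clProd p u)) := by
    rw [hcl]
    simp only [sub_eq_add_neg]
    exact (multipliable_one_add_of_summable hsum).hasProd.tendsto_prod_nat
  have hpos : 0 < clProd p u := by
    refine lt_of_le_of_ne (ge_of_tendsto' ht fun n => ?_) hne.symm
    exact Finset.prod_nonneg fun k _ => by linarith [hlt k]
  refine ⟨hpos, ?_⟩
  refine (ENNReal.tendsto_ofReal (ht.inv₀ hne)).congr fun n => ?_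
  rw [← Finset.prod_inv_distrib, ENNReal.ofReal_prod_of_nonneg]
  · refine Finset.prod_congr rfl fun k _ => ?_
    rw [ENNReal.ofReal_inv_of_pos (by linarith [hlt k]), ENNReal.ofReal_sub _ (by positivity),
      ENNReal.ofReal_one, ENNReal.ofReal_inv_of_pos (by positivity),
      ENNReal.ofReal_pow (by positivity), ENNReal.ofReal_natCast]
  · intro k _
    have := hlt k
    exact inv_nonneg.2 (by linarith)

theorem cl_identity (p : ℕ) [hp : Fact p.Prime] (u n : ℕ) (A : Type) [AddCommGroup A] [Finite A]
    (hA : ∃ k, Nat.card A = p ^ k) :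
    ∑' lam, (numSur (CLGroup p lam) A : ℝ≥0∞) * ((Nat.card (CLGroup p lam) : ℝ≥0∞) ^ u)⁻¹ *
        (numAut (CLGroup p lam) : ℝ≥0∞)⁻¹ * clR n (CLGroup p lam) =
      ((Nat.card A : ℝ≥0∞) ^ u)⁻¹ * clR n A *
        ∏ k ∈ Finset.range n, (1 - ((p : ℝ≥0∞) ^ (k + 1 + u))⁻¹)⁻¹ := by
  rw [← clW_numSur p n u A hA, mul_comm (clW _ _ _), mul_assoc, ← cl_quot_sum p hp.out,
    ← cl_group_sum p hp.out (n + u) (CLGroup p) (Fin n → ℤ) A (cl_classification p hp.out)]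
  refine tsum_congr fun lam => ?_
  have h := clW_numSur p n u (CLGroup p lam) (cl_card_group p lam)
  calc _ = (numSur (CLGroup p lam) A : ℝ≥0∞) * (numAut (CLGroup p lam) : ℝ≥0∞)⁻¹ *
        (((Nat.card (CLGroup p lam) : ℝ≥0∞) ^ u)⁻¹ * clR n (CLGroup p lam)) := by ring
    _ = _ := by rw [← h]; ring

open Filter Topology in
theorem cl_total (p : ℕ) [hp : Fact p.Prime] (u : ℕ) (A : Type) [AddCommGroup A] [Finite A]
    (hA : ∃ k, Nat.card A = p ^ k) :
    ∑' lam, (numSur (CLGroup p lam) A : ℝ≥0∞) * ((Nat.card (CLGroup p lam) : ℝ≥0∞) ^ u)⁻¹ *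
        (numAut (CLGroup p lam) : ℝ≥0∞)⁻¹ =
      ((Nat.card A : ℝ≥0∞) ^ u)⁻¹ * ENNReal.ofReal (clProd p u)⁻¹ := by
  have hAne : (Nat.card A : ℝ≥0∞) ≠ 0 := by exact_mod_cast Nat.card_pos.ne'
  have hlim : Tendsto (fun n : ℕ => ((Nat.card A : ℝ≥0∞) ^ u)⁻¹ * clR n A *
        ∏ k ∈ Finset.range n, (1 - ((p : ℝ≥0∞) ^ (k + 1 + u))⁻¹)⁻¹) atTop
      (𝓝 (((Nat.card A : ℝ≥0∞) ^ u)⁻¹ * 1 * ENNReal.ofReal (clProd p u)⁻¹)) := by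
    have hfin : ((Nat.card A : ℝ≥0∞) ^ u)⁻¹ ≠ ⊤ := ENNReal.inv_ne_top.2 (pow_ne_zero _ hAne)
    refine ENNReal.Tendsto.mul (ENNReal.Tendsto.const_mul (clR_tendsto A) (Or.inr hfin))
      (Or.inr ENNReal.ofReal_ne_top) (cl_prod_tendsto p hp.out u).2 (Or.inr ?_)
    rw [mul_one]; exact hfin
  rw [mul_one] at hlim
  apply le_antisymm
  · rw [ENNReal.tsum_eq_iSup_sum]
    refine iSup_le fun S => ?_
    have hS : Tendsto (fun n : ℕ => ∑ lam ∈ S, (numSur (CLGroup p lam) A : ℝ≥0∞) *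
        ((Nat.card (CLGroup p lam) : ℝ≥0∞) ^ u)⁻¹ *
        (numAut (CLGroup p lam) : ℝ≥0∞)⁻¹ * clR n (CLGroup p lam)) atTop
        (𝓝 (∑ lam ∈ S, (numSur (CLGroup p lam) A : ℝ≥0∞) *
        ((Nat.card (CLGroup p lam) : ℝ≥0∞) ^ u)⁻¹ *
        (numAut (CLGroup p lam) : ℝ≥0∞)⁻¹ * 1)) :=
      tendsto_finsetSum _ fun lam _ =>
        ENNReal.Tendsto.const_mul (clR_tendsto _) (Or.inl one_ne_zero)
    simp only [mul_one] at hS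
    refine le_of_tendsto_of_tendsto' hS hlim fun n => ?_
    rw [← cl_identity p u n A hA]
    exact ENNReal.sum_le_tsum S
  · refine le_of_tendsto' hlim fun n => ?_
    rw [← cl_identity p u n A hA]
    exact ENNReal.tsum_le_tsum fun lam => mul_le_of_le_one_right' (clR_le n _)

theorem cl_moments (p : ℕ) (hp : p.Prime) (hodd : Odd p) (u : ℕ)
    (A : Type) [AddCommGroup A] (hA : ∃ n : ℕ, Nat.card A = p ^ n) :
    ∑' lam : Multiset ℕ+, (numSur (CLGroup p lam) A : ℝ) * clMeasure p u (CLGroup p lam)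
      = ((Nat.card A : ℝ) ^ u)⁻¹ := by
  have : Fact p.Prime := ⟨hp⟩
  have hfin : Finite A := by
    obtain ⟨k, hk⟩ := hA
    exact Nat.finite_of_card_ne_zero (by rw [hk]; exact (pow_pos hp.pos k).ne')
  have hpos := (cl_prod_tendsto p hp u).1
  have h := congrArg ENNReal.toReal (cl_total p u A hA)
  rw [ENNReal.tsum_toReal_eq] at h
  · simp only [ENNReal.toReal_mul, ENNReal.toReal_inv, ENNReal.toReal_pow, ENNReal.toReal_natCast]
      at h
    rw [ENNReal.toReal_ofReal (inv_nonneg.2 hpos.le)] at h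
    unfold clMeasure
    simp only [← mul_assoc]
    rw [tsum_mul_right, h, mul_assoc, inv_mul_cancel₀ hpos.ne', mul_one]
  · intro lam
    have h1 : (Nat.card (CLGroup p lam) : ℝ≥0∞) ≠ 0 := by exact_mod_cast Nat.card_pos.ne'
    have h2 : (numAut (CLGroup p lam) : ℝ≥0∞) ≠ 0 := by
      exact_mod_cast cl_numAut_ne (CLGroup p lam)
    exact ENNReal.mul_ne_top (ENNReal.mul_ne_top (by finiteness)
      (ENNReal.inv_ne_top.2 (pow_ne_zero _ h1))) (ENNReal.inv_ne_top.2 h2)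
end

section
/- For every integer u ≥ 0 and every finite abelian p-group K, the sum over isomorphism classes of finite abelian p-groups B of μ^0(B) · |B|^{-u} · #{(b_1,…,b_u) ∈ B^u : B/⟨b_1,…,b_u⟩ ≅ K} equals μ^u(K). (Equivalently: if B is chosen at random according to μ^0 and b_1,…,b_u are chosen uniformly and independently in B, then B/⟨b_1,…,b_u⟩ is distributed according to μ^u.) -/
/-!
Cohen–Lenstra moments: for every integer `u ≥ 0` and every finite abelian `p`-group `A`,
the sum over isomorphism classes of finite abelian `p`-groups `B` of `|Sur(B,A)| · μ^u(B)`
equals `|A|^{-u}`.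
-/

open scoped Classical

/-! ### Classification of finite abelian p-groups by multisets -/

namespace CLProof

lemma clgroup_equiv_pi (p : ℕ) {ι : Type} [Fintype ι] (e : ι → ℕ+) :
    Nonempty ((∀ i, ZMod (p ^ (e i : ℕ))) ≃+ CLGroup p (Finset.univ.val.map e)) := by
  set lam := Finset.univ.val.map e with hlam
  -- a bijection between the index types which matches the exponents
  have key : ∃ σ : Fin lam.toList.length ≃ ι, ∀ i, e (σ i) = lam.toList.get i := by
    have h1 : (Finset.univ.val.map (fun i => lam.toList.get i) : Multiset ℕ+)
        = Finset.univ.val.map e := by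
      rw [Fin.univ_val_map, ← hlam, List.ofFn_get, Multiset.coe_toList]
    have h2 : ∀ a : ℕ+, Fintype.card {i // lam.toList.get i = a} = Fintype.card {i // e i = a} := by
      intro a
      have := congrArg (Multiset.count a) h1
      rw [Multiset.count_map, Multiset.count_map] at this
      rw [Fintype.card_subtype, Fintype.card_subtype]
      simp only [Finset.card, Finset.filter_val]
      convert this using 3 <;> simp [eq_comm]
    refine ⟨(Equiv.sigmaFiberEquiv lam.toList.get).symm.trans
      ((Equiv.sigmaCongrRight fun a => Fintype.equivOfCardEq (h2 a)).trans
        (Equiv.sigmaFiberEquiv e)), fun i => ?_⟩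
    simp only [Equiv.trans_apply]
    exact ((Fintype.equivOfCardEq (h2 (lam.toList.get i))) ⟨i, rfl⟩).2
  obtain ⟨σ, hσ⟩ := key
  refine ⟨(AddEquiv.mk' (Equiv.piCongrLeft (fun i => ZMod (p ^ (e i : ℕ))) σ).symm ?_).trans
    (AddEquiv.piCongrRight fun i => (ZMod.ringEquivCongr (by rw [hσ i])).toAddEquiv)⟩
  intro x y
  ext i
  simp [Equiv.piCongrLeft]

lemma exists_clgroup (p : ℕ) (hp : p.Prime) (G : Type) [AddCommGroup G] (k : ℕ)
    (hG : Nat.card G = p ^ k) : ∃ lam, Nonempty (G ≃+ CLGroup p lam) := by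
  have : Finite G := Nat.finite_of_card_ne_zero (by rw [hG]; exact pow_ne_zero _ hp.ne_zero)
  obtain ⟨ι, _, n, hn, ⟨f⟩⟩ := AddCommGroup.equiv_directSum_zmod_of_finite' G
  let f' : G ≃+ ∀ i, ZMod (n i) := f.trans (DirectSum.addEquivProd _)
  have hc : ∏ i, n i = p ^ k := by
    rw [← hG, Nat.card_congr f'.toEquiv, Nat.card_pi]; simp
  have hi : ∀ i, ∃ e : ℕ+, n i = p ^ (e : ℕ) := by
    intro i
    obtain ⟨m, -, hm⟩ := (Nat.dvd_prime_pow hp).1 (hc ▸ Finset.dvd_prod_of_mem n (Finset.mem_univ i))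
    have : m ≠ 0 := by rintro rfl; have := hn i; simp at hm; omega
    exact ⟨⟨m, Nat.pos_of_ne_zero this⟩, hm⟩
  choose e he using hi
  obtain ⟨g⟩ := clgroup_equiv_pi p e
  exact ⟨_, ⟨f'.trans ((AddEquiv.piCongrRight fun i =>
    (ZMod.ringEquivCongr (he i)).toAddEquiv).trans g)⟩⟩

lemma card_zmod_tors (p : ℕ) (hp : p.Prime) (a k : ℕ) :
    Nat.card {x : ZMod (p ^ a) // p ^ k • x = 0} = p ^ min a k := by
  have : NeZero (p ^ a) := ⟨pow_ne_zero _ hp.ne_zero⟩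
  have h := IsAddCyclic.card_nsmulAddMonoidHom_ker (ZMod (p ^ a)) (p ^ k)
  rw [Nat.card_zmod] at h
  have h2 : (p ^ a).gcd (p ^ k) = p ^ min a k := by
    rcases le_total a k with h | h
    · rw [min_eq_left h, Nat.gcd_eq_left (pow_dvd_pow _ h)]
    · rw [min_eq_right h, Nat.gcd_eq_right (pow_dvd_pow _ h)]
  rw [← h2, ← h]
  rfl

lemma card_clgroup_tors (p : ℕ) (hp : p.Prime) (lam : Multiset ℕ+) (k : ℕ) :
    Nat.card {x : CLGroup p lam // p ^ k • x = 0} =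
      p ^ (lam.map fun a : ℕ+ => min (a : ℕ) k).sum := by
  have e : {x : CLGroup p lam // p ^ k • x = 0} ≃
      ∀ i : Fin lam.toList.length, {x : ZMod (p ^ (lam.toList.get i : ℕ)) // p ^ k • x = 0} :=
    (Equiv.subtypeEquivRight fun x => 
      (funext_iff (f := fun i : Fin lam.toList.length => p ^ k • ((show ∀ i : Fin lam.toList.length,
        ZMod (p ^ (lam.toList.get i : ℕ)) from x) i)) (g := fun _ => 0))).trans
      (Equiv.subtypePiEquivPi (p := fun i (x : ZMod (p ^ (lam.toList.get i : ℕ))) => p ^ k • x = 0))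
  rw [Nat.card_congr e, Nat.card_pi]
  simp_rw [card_zmod_tors p hp]
  rw [Finset.prod_pow_eq_pow_sum]
  congr 1
  conv_rhs => rw [← Multiset.coe_toList lam]
  rw [Multiset.map_coe, Multiset.sum_coe, ← List.sum_ofFn]
  congr 1
  rw [← List.ofFn_getElem (xs := List.map _ _)]
  apply List.ext_get <;> simp

lemma clgroup_unique (p : ℕ) (hp : p.Prime) (lam mu : Multiset ℕ+)
    (f : CLGroup p lam ≃+ CLGroup p mu) : lam = mu := by
  have h (k : ℕ) : (lam.map fun a : ℕ+ => min (a : ℕ) k).sum =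
      (mu.map fun a : ℕ+ => min (a : ℕ) k).sum := by
    apply Nat.pow_right_injective hp.two_le
    simp only
    rw [← card_clgroup_tors p hp, ← card_clgroup_tors p hp]
    exact Nat.card_congr (f.toEquiv.subtypeEquiv fun x => by
      simp [← map_nsmul])
  have h2 (nu : Multiset ℕ+) (a : ℕ+) : 2 * (nu.map fun b : ℕ+ => min (b : ℕ) a).sum =
      (nu.map fun b : ℕ+ => min (b : ℕ) ((a : ℕ) - 1)).sum + (nu.map fun b : ℕ+ => min (b : ℕ) ((a : ℕ) + 1)).sum
        + nu.count a := by
    induction nu using Multiset.induction_on with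
    | empty => simp
    | cons b s ih =>
      simp only [Multiset.map_cons, Multiset.sum_cons, Multiset.count_cons]
      have hab : a = b ↔ (a : ℕ) = b := PNat.coe_inj.symm
      have key : ∀ x y : ℕ, 0 < x → 0 < y → 2 * min y x =
          min y (x - 1) + min y (x + 1) + if x = y then 1 else 0 := by
        intro x y hx hy
        split_ifs <;> omega
      have := key a b a.pos b.pos
      simp only [hab]
      omega
  ext a
  have := h2 lam a
  rw [h, h, h, h2 mu a] at this
  omega

lemma card_clgroup (p : ℕ) (lam : Multiset ℕ+) :
    ∃ k, Nat.card (CLGroup p lam) = p ^ k := by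
  refine ⟨∑ i : Fin lam.toList.length, (lam.toList.get i : ℕ), ?_⟩
  unfold CLGroup
  rw [Nat.card_pi]
  simp [Finset.prod_pow_eq_pow_sum]


/-! ### Subgroups of a product -/

section Lattice

open scoped ENNReal

variable {A F : Type} [AddCommGroup A] [AddCommGroup F]

/-- The subgroup of `A × F` attached to `M ≤ A`, `R ≤ F` and `h : R →+ A ⧸ M`. -/
def mkSub (M : AddSubgroup A) (R : AddSubgroup F) (h : R →+ A ⧸ M) : AddSubgroup (A × F) where
  carrier := {x | ∃ hx : x.2 ∈ R, h ⟨x.2, hx⟩ = (x.1 : A ⧸ M)}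
  zero_mem' := ⟨R.zero_mem, by
    have : (⟨(0 : A × F).2, R.zero_mem⟩ : R) = 0 := rfl
    rw [this, map_zero]; rfl⟩
  add_mem' := by
    rintro x y ⟨hx, ex⟩ ⟨hy, ey⟩
    refine ⟨R.add_mem hx hy, ?_⟩
    have : (⟨(x + y).2, R.add_mem hx hy⟩ : R) = ⟨x.2, hx⟩ + ⟨y.2, hy⟩ := rfl
    rw [this, map_add, ex, ey]; rfl
  neg_mem' := by
    rintro x ⟨hx, ex⟩
    refine ⟨R.neg_mem hx, ?_⟩
    have : (⟨(-x).2, R.neg_mem hx⟩ : R) = -⟨x.2, hx⟩ := rfl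
    rw [this, map_neg, ex]; rfl

lemma mem_mkSub (M : AddSubgroup A) (R : AddSubgroup F) (h : R →+ A ⧸ M) (x : A × F) :
    x ∈ mkSub M R h ↔ ∃ hx : x.2 ∈ R, h ⟨x.2, hx⟩ = (x.1 : A ⧸ M) := Iff.rfl

lemma mkSub_comap (M : AddSubgroup A) (R : AddSubgroup F) (h : R →+ A ⧸ M) :
    (mkSub M R h).comap (AddMonoidHom.inl A F) = M := by
  ext a
  rw [AddSubgroup.mem_comap, mem_mkSub]
  simp only [AddMonoidHom.inl_apply]
  constructor
  · rintro ⟨hx, e⟩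
    have : (⟨0, hx⟩ : R) = 0 := rfl
    rw [this, map_zero] at e
    exact (QuotientAddGroup.eq_zero_iff a).1 e.symm
  · intro ha
    refine ⟨R.zero_mem, ?_⟩
    have : (⟨0, R.zero_mem⟩ : R) = 0 := rfl
    rw [this, map_zero]
    exact ((QuotientAddGroup.eq_zero_iff a).2 ha).symm

lemma mkSub_map (M : AddSubgroup A) (R : AddSubgroup F) (h : R →+ A ⧸ M) :
    (mkSub M R h).map (AddMonoidHom.snd A F) = R := by
  ext f
  rw [AddSubgroup.mem_map]
  constructor
  · rintro ⟨x, ⟨hx, e⟩, rfl⟩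
    exact hx
  · intro hf
    obtain ⟨a, ha⟩ := QuotientAddGroup.mk_surjective (h ⟨f, hf⟩)
    exact ⟨(a, f), ⟨hf, ha.symm⟩, rfl⟩

lemma mkSub_inj (M : AddSubgroup A) (R : AddSubgroup F) (h h' : R →+ A ⧸ M)
    (e : mkSub M R h = mkSub M R h') : h = h' := by
  ext ⟨f, hf⟩
  obtain ⟨a, ha⟩ := QuotientAddGroup.mk_surjective (h ⟨f, hf⟩)
  have : ((a, f) : A × F) ∈ mkSub M R h := ⟨hf, ha.symm⟩
  rw [e] at this
  obtain ⟨_, h2⟩ := this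
  rw [h2]; exact ha.symm

lemma mkSub_surj (L : AddSubgroup (A × F)) :
    ∃ h, mkSub (L.comap (AddMonoidHom.inl A F)) (L.map (AddMonoidHom.snd A F)) h = L := by
  set M := L.comap (AddMonoidHom.inl A F) with hM
  set R := L.map (AddMonoidHom.snd A F) with hR
  let s : L →+ R := (AddMonoidHom.snd A F).addSubgroupMap L
  have hs : Function.Surjective s := (AddMonoidHom.snd A F).addSubgroupMap_surjective L
  let t : L →+ A ⧸ M := (QuotientAddGroup.mk' M).comp ((AddMonoidHom.fst A F).comp L.subtype)
  have hst : s.ker ≤ t.ker := by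
    rintro ⟨⟨a, f⟩, hx⟩ h
    have hf : f = 0 := congrArg Subtype.val h
    subst hf
    exact (QuotientAddGroup.eq_zero_iff a).2 hx
  have hl := AddMonoidHom.liftOfRightInverse_comp_apply s (Function.surjInv hs)
    (Function.rightInverse_surjInv hs) ⟨t, hst⟩
  refine ⟨s.liftOfSurjective hs ⟨t, hst⟩, ?_⟩
  ext ⟨a, f⟩
  rw [mem_mkSub]
  constructor
  · rintro ⟨⟨⟨a', f'⟩, hx', hff⟩, e⟩
    have hff' : f' = f := hff
    subst hff'
    have h1 := hl ⟨(a', f'), hx'⟩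
    have h2 : ((a' : A) : A ⧸ M) = (a : A ⧸ M) := h1.symm.trans e
    have h3 : -a' + a ∈ M := QuotientAddGroup.eq.1 h2
    have h4 : ((-a' + a, 0) : A × F) ∈ L := h3
    have := L.add_mem hx' h4
    simpa using this
  · intro hx
    exact ⟨⟨(a, f), hx, rfl⟩, hl ⟨(a, f), hx⟩⟩

/-- Subgroups of a product. -/
noncomputable def subEquiv (A F : Type) [AddCommGroup A] [AddCommGroup F] :
    (Σ x : AddSubgroup A × AddSubgroup F, (x.2 →+ A ⧸ x.1)) ≃ AddSubgroup (A × F) :=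
  Equiv.ofBijective (fun x => mkSub x.1.1 x.1.2 x.2) <| by
    constructor
    · rintro ⟨⟨M, R⟩, h⟩ ⟨⟨M', R'⟩, h'⟩ e
      have e1 := congrArg (AddSubgroup.comap (AddMonoidHom.inl A F)) e
      have e2 := congrArg (AddSubgroup.map (AddMonoidHom.snd A F)) e
      simp only [mkSub_comap, mkSub_map] at e1 e2
      subst e1 e2
      have : h = h' := mkSub_inj _ _ _ _ e
      rw [this]
    · intro L
      obtain ⟨h, e⟩ := mkSub_surj L
      exact ⟨⟨(_, _), h⟩, e⟩

lemma index_prod (L : AddSubgroup (A × F)) :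
    L.index = (L.comap (AddMonoidHom.inl A F)).index * (L.map (AddMonoidHom.snd A F)).index := by
  have hs : Function.Surjective (AddMonoidHom.snd A F) := Prod.snd_surjective
  have hr : (AddMonoidHom.inl A F).range = (AddMonoidHom.snd A F).ker := by
    ext ⟨a, f⟩
    rw [AddMonoidHom.mem_ker]
    constructor
    · rintro ⟨x, hx⟩; exact (congrArg Prod.snd hx).symm
    · rintro h; exact ⟨a, Prod.ext rfl h.symm⟩
  rw [AddSubgroup.index_comap, hr, ← AddSubgroup.index_comap_of_surjective _ hs,
    AddSubgroup.comap_map_eq]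
  have := AddSubgroup.relIndex_mul_index (le_sup_left : L ≤ L ⊔ (AddMonoidHom.snd A F).ker)
  rw [← this]
  congr 1
  rw [sup_comm, AddSubgroup.relIndex_sup_right]

/-- Homomorphisms out of `ℤ^n` are tuples. -/
noncomputable def homEquiv (n : ℕ) (B : Type) [AddCommGroup B] :
    (Fin n → B) ≃ ((Fin n → ℤ) →+ B) :=
  ((Pi.basisFun ℤ (Fin n)).constr ℤ).toEquiv.trans (addMonoidHomLequivInt ℤ).symm.toEquiv

lemma homEquiv_apply (n : ℕ) (B : Type) [AddCommGroup B] (b : Fin n → B) (x : Fin n → ℤ) :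
    homEquiv n B b x = ∑ i, x i • b i := by
  simp [homEquiv, Module.Basis.constr_apply_fintype, addMonoidHomLequivInt]

lemma homEquiv_comp (n : ℕ) (B C : Type) [AddCommGroup B] [AddCommGroup C] (b : Fin n → B)
    (g : B →+ C) : g.comp (homEquiv n B b) = homEquiv n C (g ∘ b) := by
  ext x
  simp [homEquiv_apply]

lemma homEquiv_range (n : ℕ) (B : Type) [AddCommGroup B] (b : Fin n → B) :
    (homEquiv n B b).range = AddSubgroup.closure (Set.range b) := by
  apply le_antisymm
  · rintro _ ⟨x, rfl⟩
    rw [homEquiv_apply]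
    exact sum_mem fun i _ => zsmul_mem (AddSubgroup.subset_closure (Set.mem_range_self i)) _
  · rw [AddSubgroup.closure_le]
    rintro _ ⟨i, rfl⟩
    refine ⟨Pi.single i 1, ?_⟩
    rw [homEquiv_apply, Finset.sum_eq_single i]
    · simp
    · intro j _ hj; simp [hj]
    · simp

lemma card_hom_sub (b : ℕ) (R : AddSubgroup (Fin b → ℤ)) (hR : R.index ≠ 0) (Q : Type)
    [AddCommGroup Q] : Nat.card (R →+ Q) = Nat.card Q ^ b := by
  have : (AddSubgroup.toIntSubmodule R).toAddSubgroup.index ≠ 0 := by simpa using hR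
  obtain ⟨e⟩ := (Int.submodule_toAddSubgroup_index_ne_zero_iff).1 this
  let e' : R ≃+ (Fin b → ℤ) := e.toAddEquiv
  rw [Nat.card_congr (e'.addMonoidHomCongrLeft (N := Q)).toEquiv,
    ← Nat.card_congr (homEquiv b Q), Nat.card_fun]
  simp

/-- The weight `n^{-s}` if `n` is a power of `p`, and zero otherwise. -/
noncomputable def wt (p s n : ℕ) : ℝ≥0∞ := if ∃ k, n = p ^ k then ((n : ℝ≥0∞) ^ s)⁻¹ else 0

lemma wt_mul (p : ℕ) (hp : p.Prime) (s m n : ℕ) : wt p s (m * n) = wt p s m * wt p s n := by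
  unfold wt
  by_cases hm : ∃ k, m = p ^ k
  · by_cases hn : ∃ k, n = p ^ k
    · obtain ⟨a, rfl⟩ := hm
      obtain ⟨b, rfl⟩ := hn
      rw [if_pos ⟨a + b, (pow_add _ _ _).symm⟩, if_pos ⟨a, rfl⟩, if_pos ⟨b, rfl⟩]
      push_cast
      rw [mul_pow, ENNReal.mul_inv]
      · right; finiteness
      · left; finiteness
    · rw [if_neg hn, mul_zero, if_neg]
      rintro ⟨k, hk⟩
      obtain ⟨j, -, hj⟩ := (Nat.dvd_prime_pow hp).1 (Dvd.intro_left _ hk)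
      exact hn ⟨j, hj⟩
  · rw [if_neg hm, zero_mul, if_neg]
    rintro ⟨k, hk⟩
    obtain ⟨j, -, hj⟩ := (Nat.dvd_prime_pow hp).1 (Dvd.intro _ hk)
    exact hm ⟨j, hj⟩

lemma tsum_prod_sub (p : ℕ) (hp : p.Prime) (s b : ℕ) (A : Type) [AddCommGroup A]
    (g : AddSubgroup (Fin b → ℤ) → ℝ≥0∞) :
    ∑' L : AddSubgroup (A × (Fin b → ℤ)), g (L.map (AddMonoidHom.snd _ _)) * wt p s L.index =
      (∑' M : AddSubgroup A, wt p s M.index * (M.index : ℝ≥0∞) ^ b) *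
        ∑' R : AddSubgroup (Fin b → ℤ), g R * wt p s R.index := by
  rw [← (subEquiv A (Fin b → ℤ)).tsum_eq, ENNReal.tsum_sigma', ENNReal.tsum_prod',
    ← ENNReal.tsum_mul_right]
  refine tsum_congr fun M => ?_
  rw [← ENNReal.tsum_mul_left]
  refine tsum_congr fun R => ?_
  have : ∀ h : R →+ A ⧸ M, g ((subEquiv A (Fin b → ℤ) ⟨(M, R), h⟩).map (AddMonoidHom.snd _ _)) *
      wt p s (subEquiv A (Fin b → ℤ) ⟨(M, R), h⟩).index =
        g R * (wt p s M.index * wt p s R.index) := by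
    intro h
    have e : subEquiv A (Fin b → ℤ) ⟨(M, R), h⟩ = mkSub M R h := rfl
    rw [e, mkSub_map, index_prod, mkSub_map, mkSub_comap, wt_mul p hp]
  simp only [this]
  by_cases hM : M.index = 0
  · have : wt p s M.index = 0 := by
      unfold wt; rw [if_neg]; rintro ⟨k, hk⟩
      exact pow_ne_zero k hp.ne_zero (hk ▸ hM)
    simp [this]
  by_cases hR : R.index = 0
  · have : wt p s R.index = 0 := by
      unfold wt; rw [if_neg]; rintro ⟨k, hk⟩
      exact pow_ne_zero k hp.ne_zero (hk ▸ hR)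
    simp [this]
  have hc : Nat.card (R →+ A ⧸ M) = M.index ^ b := card_hom_sub b R hR _
  have : Finite (R →+ A ⧸ M) := Nat.finite_of_card_ne_zero (by rw [hc]; exact pow_ne_zero _ hM)
  rw [ENNReal.tsum_const, ENat.card_eq_coe_natCard, hc]
  push_cast
  ring

/-- The zeta function. -/
noncomputable def zt (p s : ℕ) (A : Type) [AddCommGroup A] : ℝ≥0∞ :=
  ∑' M : AddSubgroup A, wt p s M.index

lemma zt_congr (p s : ℕ) {A B : Type} [AddCommGroup A] [AddCommGroup B] (e : A ≃+ B) :
    zt p s A = zt p s B := by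
  unfold zt
  rw [← e.mapAddSubgroup.toEquiv.tsum_eq]
  refine tsum_congr fun M => ?_
  congr 1
  exact (AddSubgroup.index_map_equiv M e).symm

lemma tsum_int (p : ℕ) (hp : p.Prime) (s b : ℕ) :
    ∑' M : AddSubgroup ℤ, wt p s M.index * (M.index : ℝ≥0∞) ^ b =
      (1 - ((p : ℝ≥0∞) ^ s)⁻¹ * (p : ℝ≥0∞) ^ b)⁻¹ := by
  rw [← ENNReal.tsum_geometric]
  have hinj : Function.Injective fun k : ℕ => AddSubgroup.zmultiples ((p ^ k : ℕ) : ℤ) := by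
    intro k l h
    have := congrArg AddSubgroup.index h
    simp only [Int.index_zmultiples, Int.natAbs_natCast] at this
    exact Nat.pow_right_injective hp.two_le this
  rw [← hinj.tsum_eq]
  · refine tsum_congr fun k => ?_
    rw [Int.index_zmultiples, Int.natAbs_natCast, wt, if_pos ⟨k, rfl⟩, mul_pow]
    push_cast
    rw [← ENNReal.inv_pow, ← pow_mul, ← pow_mul, ← pow_mul, ← pow_mul, mul_comm k, mul_comm k]
  · intro M hM
    rw [Function.mem_support] at hM
    have hw : wt p s M.index ≠ 0 := left_ne_zero_of_mul hM
    unfold wt at hw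
    have hk : ∃ k, M.index = p ^ k := by
      by_contra h; exact hw (if_neg h)
    obtain ⟨k, hk⟩ := hk
    obtain ⟨a, ha⟩ := Int.subgroup_cyclic M
    refine ⟨k, ?_⟩
    rw [← AddSubgroup.zmultiples_eq_closure] at ha
    subst ha
    rw [Int.index_zmultiples] at hk
    simp only [← hk]
    exact Int.zmultiples_natAbs a

lemma zt_pi (p : ℕ) (hp : p.Prime) (s u : ℕ) :
    zt p s (Fin u → ℤ) =
      ∏ i ∈ Finset.range u, (1 - ((p : ℝ≥0∞) ^ s)⁻¹ * (p : ℝ≥0∞) ^ i)⁻¹ := by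
  induction u with
  | zero =>
    have : Unique (AddSubgroup (Fin 0 → ℤ)) := ⟨⟨⊤⟩, fun a => Subsingleton.elim _ _⟩
    unfold zt
    rw [tsum_eq_single ⊤]
    · simp only [AddSubgroup.index_top, wt, Finset.range_zero, Finset.prod_empty]
      rw [if_pos ⟨0, by simp⟩]; simp
    · intro b hb; exact absurd (Subsingleton.elim _ _) hb
  | succ u ih =>
    rw [Finset.prod_range_succ, ← ih, ← tsum_int p hp]
    have e : (Fin (u + 1) → ℤ) ≃+ ℤ × (Fin u → ℤ) :=
      (AddEquiv.mk' (Fin.consEquiv fun _ => ℤ) (by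
        rintro x y; ext i; refine Fin.cases ?_ (fun j => ?_) i <;> simp [Fin.consEquiv])).symm
    rw [zt_congr p s e]
    have := tsum_prod_sub p hp s u ℤ (fun _ => 1)
    simp only [one_mul] at this
    rw [zt, this, mul_comm]; rfl

end Lattice


/-! ### Counting surjections -/

section Counting

open scoped ENNReal

lemma card_surj_ker (F C : Type) [AddCommGroup F] [AddCommGroup C] (L : AddSubgroup F) :
    Nat.card {ψ : F →+ C // Function.Surjective ψ ∧ ψ.ker = L} =
      if Nonempty ((F ⧸ L) ≃+ C) then numAut C else 0 := by
  have e : ((F ⧸ L) ≃+ C) ≃ {ψ : F →+ C // Function.Surjective ψ ∧ ψ.ker = L} := by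
    refine Equiv.ofBijective (fun f => ⟨f.toAddMonoidHom.comp (QuotientAddGroup.mk' L), ?_, ?_⟩) ?_
    · exact f.surjective.comp (QuotientAddGroup.mk'_surjective L)
    · ext x
      simp [AddMonoidHom.mem_ker]
    · constructor
      · intro f g h
        ext x
        obtain ⟨x, rfl⟩ := QuotientAddGroup.mk'_surjective L x
        exact DFunLike.congr_fun (congrArg Subtype.val h) x
      · rintro ⟨ψ, hs, rfl⟩
        refine ⟨QuotientAddGroup.quotientKerEquivOfSurjective ψ hs, ?_⟩
        apply Subtype.ext
        ext x
        rfl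
  rw [← Nat.card_congr e]
  split_ifs with h
  · obtain ⟨f⟩ := h
    unfold numAut
    exact Nat.card_congr ⟨fun g => f.symm.trans g, fun g => f.trans g,
      fun g => by ext; simp, fun g => by ext; simp⟩
  · rw [not_nonempty_iff] at h
    exact Nat.card_of_isEmpty

lemma surj_coprod_iff {A F B : Type} [AddCommGroup A] [AddCommGroup F] [AddCommGroup B]
    (α : A →+ B) (β : F →+ B) (N : AddSubgroup B) (hN : α.range = N) :
    Function.Surjective (α.coprod β) ↔
      Function.Surjective ((QuotientAddGroup.mk' N).comp β) := by
  subst hN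
  constructor
  · intro h q
    obtain ⟨y, rfl⟩ := QuotientAddGroup.mk'_surjective _ q
    obtain ⟨⟨a, f⟩, rfl⟩ := h y
    refine ⟨f, ?_⟩
    apply QuotientAddGroup.eq.2
    exact ⟨a, by simp [add_comm]⟩
  · intro h y
    obtain ⟨f, hf⟩ := h (y : B ⧸ α.range)
    obtain ⟨a, ha⟩ := QuotientAddGroup.eq.1 hf
    exact ⟨(a, f), by simp [ha]⟩

lemma ker_coprod {A F B : Type} [AddCommGroup A] [AddCommGroup F] [AddCommGroup B]
    (α : A →+ B) (β : F →+ B) (N : AddSubgroup B) (hN : α.range = N) :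
    (α.coprod β).ker.map (AddMonoidHom.snd A F) = ((QuotientAddGroup.mk' N).comp β).ker := by
  subst hN
  ext f
  rw [AddMonoidHom.mem_ker]
  constructor
  · rintro ⟨⟨a, f'⟩, h, rfl⟩
    have h' : α a + β f' = 0 := h
    refine (QuotientAddGroup.eq_zero_iff _).2 ⟨-a, ?_⟩
    rw [map_neg]
    exact (eq_neg_of_add_eq_zero_right h').symm
  · intro h
    obtain ⟨a, ha⟩ := (QuotientAddGroup.eq_zero_iff _).1 h
    refine ⟨(-a, f), ?_, rfl⟩
    show α (-a) + β f = 0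
    rw [map_neg, ha]
    simp

/-- The auxiliary set of surjections. -/
abbrev TSet (u r : ℕ) (R : AddSubgroup (Fin r → ℤ)) (B : Type) [AddCommGroup B] : Type :=
  {ψ : (Fin u → ℤ) × (Fin r → ℤ) →+ B //
    Function.Surjective ψ ∧ ψ.ker.map (AddMonoidHom.snd _ _) = R}

instance finite_hom (n : ℕ) (B : Type) [AddCommGroup B] [Finite B] :
    Finite ((Fin n → ℤ) →+ B) := Finite.of_equiv _ (homEquiv n B)

/-- Maps out of a product. -/
noncomputable def coprodEquiv (u r : ℕ) (B : Type) [AddCommGroup B] :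
    (Fin u → B) × (Fin r → B) ≃ ((Fin u → ℤ) × (Fin r → ℤ) →+ B) :=
  ((homEquiv u B).prodCongr (homEquiv r B)).trans
    ⟨fun x => x.1.coprod x.2,
      fun ψ => (ψ.comp (AddMonoidHom.inl _ _), ψ.comp (AddMonoidHom.inr _ _)),
      fun x => by ext <;> simp, fun ψ => by ext <;> simp⟩

lemma coprodEquiv_apply (u r : ℕ) (B : Type) [AddCommGroup B] (x : (Fin u → B) × (Fin r → B)) :
    coprodEquiv u r B x = (homEquiv u B x.1).coprod (homEquiv r B x.2) := rfl

lemma card_TSet_ennreal (u r : ℕ) (R : AddSubgroup (Fin r → ℤ)) (B : Type) [AddCommGroup B]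
    [Finite B] : (Nat.card (TSet u r R B) : ℝ≥0∞) =
      ∑' L : AddSubgroup ((Fin u → ℤ) × (Fin r → ℤ)),
        if L.map (AddMonoidHom.snd _ _) = R ∧ Nonempty ((((Fin u → ℤ) × (Fin r → ℤ)) ⧸ L) ≃+ B)
          then (numAut B : ℝ≥0∞) else 0 := by
  have : Finite ((Fin u → ℤ) × (Fin r → ℤ) →+ B) := Finite.of_equiv _ (coprodEquiv u r B)
  have h1 : (Nat.card (TSet u r R B) : ℝ≥0∞) = ∑' _ : TSet u r R B, (1 : ℝ≥0∞) := by
    rw [ENNReal.tsum_one, ENat.card_eq_coe_natCard]; rfl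
  rw [h1, ← (Equiv.sigmaFiberEquiv (fun ψ : TSet u r R B => ψ.1.ker)).tsum_eq,
    ENNReal.tsum_sigma']
  refine tsum_congr fun L => ?_
  rw [ENNReal.tsum_one, ENat.card_eq_coe_natCard]
  by_cases hL : L.map (AddMonoidHom.snd _ _) = R
  · have e : {ψ : TSet u r R B // ψ.1.ker = L} ≃
        {ψ : (Fin u → ℤ) × (Fin r → ℤ) →+ B // Function.Surjective ψ ∧ ψ.ker = L} :=
      ⟨fun ψ => ⟨ψ.1.1, ψ.1.2.1, ψ.2⟩, fun ψ => ⟨⟨ψ.1, ψ.2.1, by rw [ψ.2.2, hL]⟩, ψ.2.2⟩,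
        fun _ => rfl, fun _ => rfl⟩
    rw [Nat.card_congr e, card_surj_ker]
    simp only [hL, true_and]
    split_ifs <;> simp
  · have : IsEmpty {ψ : TSet u r R B // ψ.1.ker = L} :=
      ⟨fun ψ => hL (by rw [← ψ.2, ψ.1.2.2])⟩
    simp [hL]

/-- The tuples with quotient `K`. -/
abbrev NSet (u : ℕ) (B K : Type) [AddCommGroup B] [AddCommGroup K] : Type :=
  {b : Fin u → B // Nonempty ((B ⧸ AddSubgroup.closure (Set.range b)) ≃+ K)}

lemma card_fiber (r : ℕ) (R : AddSubgroup (Fin r → ℤ)) (B K : Type) [AddCommGroup B]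
    [AddCommGroup K] [Finite B] (f : ((Fin r → ℤ) ⧸ R) ≃+ K) (N : AddSubgroup B) :
    Nat.card {x : Fin r → B //
      Function.Surjective ((QuotientAddGroup.mk' N).comp (homEquiv r B x)) ∧
        ((QuotientAddGroup.mk' N).comp (homEquiv r B x)).ker = R} * Nat.card K ^ r =
      if Nonempty ((B ⧸ N) ≃+ K) then numAut K * Nat.card B ^ r else 0 := by
  let e1 : B ≃ (B ⧸ N) × N :=
    { toFun := fun x => ((x : B ⧸ N), ⟨-(Quotient.out (x : B ⧸ N)) + x,
        QuotientAddGroup.eq.1 (Quotient.out_eq' (x : B ⧸ N))⟩)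
      invFun := fun z => Quotient.out z.1 + z.2
      left_inv := fun x => by simp
      right_inv := fun z => by
        obtain ⟨q, n, hn⟩ := z
        have h : ((Quotient.out q + n : B) : B ⧸ N) = q := by
          conv_rhs => rw [← Quotient.out_eq' q]
          exact (QuotientAddGroup.eq.2 (by simpa using hn)).symm
        apply Prod.ext
        · exact h
        · apply Subtype.ext
          simp only [h]
          simp }
  let e0 : (Fin r → B) ≃ (Fin r → B ⧸ N) × (Fin r → N) :=
    (Equiv.piCongrRight fun _ => e1).trans (Equiv.arrowProdEquivProdArrow _ _ _)
  have he0 : ∀ x, (e0 x).1 = (QuotientAddGroup.mk' N) ∘ x := fun x => rfl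
  let P : (Fin r → B ⧸ N) → Prop := fun y =>
    Function.Surjective (homEquiv r (B ⧸ N) y) ∧ (homEquiv r (B ⧸ N) y).ker = R
  have e2 : {x : Fin r → B //
      Function.Surjective ((QuotientAddGroup.mk' N).comp (homEquiv r B x)) ∧
        ((QuotientAddGroup.mk' N).comp (homEquiv r B x)).ker = R} ≃
      {ψ : (Fin r → ℤ) →+ B ⧸ N // Function.Surjective ψ ∧ ψ.ker = R} × (Fin r → N) :=
    ((e0.subtypeEquiv (q := fun z => P z.1) (fun x => by
      simp only [P, he0]; rw [homEquiv_comp])).trans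
      Equiv.prodSubtypeFstEquivSubtypeProd).trans
      (((homEquiv r (B ⧸ N)).subtypeEquiv fun y => Iff.rfl).prodCongr (Equiv.refl _))
  rw [Nat.card_congr e2, Nat.card_prod, card_surj_ker, Nat.card_fun, Nat.card_fin]
  by_cases h : Nonempty ((B ⧸ N) ≃+ K)
  · obtain ⟨g⟩ := h
    rw [if_pos ⟨f.trans g.symm⟩, if_pos ⟨g⟩, Nat.card_congr e1, Nat.card_prod,
      Nat.card_congr g.toEquiv]
    have : numAut (B ⧸ N) = numAut K :=
      Nat.card_congr ⟨fun k => (g.symm.trans k).trans g, fun k => (g.trans k).trans g.symm,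
        fun k => by ext; simp, fun k => by ext; simp⟩
    rw [this]
    ring
  · rw [if_neg h, if_neg, zero_mul, zero_mul]
    rintro ⟨g⟩
    exact h ⟨g.symm.trans f⟩

lemma card_TSet (u r : ℕ) (R : AddSubgroup (Fin r → ℤ)) (B K : Type) [AddCommGroup B]
    [AddCommGroup K] [Finite B] (f : ((Fin r → ℤ) ⧸ R) ≃+ K) :
    Nat.card (TSet u r R B) * Nat.card K ^ r =
      Nat.card (NSet u B K) * numAut K * Nat.card B ^ r := by
  have e : TSet u r R B ≃ Σ b : Fin u → B, {x : Fin r → B //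
      Function.Surjective ((QuotientAddGroup.mk' (AddSubgroup.closure (Set.range b))).comp
        (homEquiv r B x)) ∧
      ((QuotientAddGroup.mk' (AddSubgroup.closure (Set.range b))).comp (homEquiv r B x)).ker = R} :=
    ((coprodEquiv u r B).subtypeEquiv (p := fun x : (Fin u → B) × (Fin r → B) =>
      Function.Surjective ((QuotientAddGroup.mk' (AddSubgroup.closure (Set.range x.1))).comp
        (homEquiv r B x.2)) ∧
      ((QuotientAddGroup.mk' (AddSubgroup.closure (Set.range x.1))).comp
        (homEquiv r B x.2)).ker = R) (fun x => by
        rw [coprodEquiv_apply, surj_coprod_iff _ _ _ (homEquiv_range u B x.1),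
          ker_coprod _ _ _ (homEquiv_range u B x.1)])).symm.trans
      ⟨fun x => ⟨x.1.1, x.1.2, x.2⟩, fun x => ⟨(x.1, x.2.1), x.2.2⟩, fun _ => rfl, fun _ => rfl⟩
  have := Fintype.ofFinite (Fin u → B)
  rw [Nat.card_congr e, Nat.card_sigma, Finset.sum_mul]
  simp_rw [card_fiber r R B K f]
  rw [← Finset.sum_filter, Finset.sum_const, ← Fintype.card_subtype, ← Nat.card_eq_fintype_card]
  simp [mul_assoc]

end Counting


/-! ### Assembly -/

section Assembly

open scoped ENNReal

lemma numAut_ne_zero (B : Type) [AddCommGroup B] [Finite B] : numAut B ≠ 0 := by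
  unfold numAut
  have : Finite (B ≃+ B) := Finite.of_injective (fun e : B ≃+ B => (e : B → B))
    DFunLike.coe_injective
  exact Nat.card_pos.ne'

lemma finite_clgroup (p : ℕ) (hp : p.Prime) (lam : Multiset ℕ+) : Finite (CLGroup p lam) := by
  obtain ⟨k, hk⟩ := card_clgroup p lam
  exact Nat.finite_of_card_ne_zero (by rw [hk]; exact pow_ne_zero _ hp.ne_zero)

lemma tsum_clgroup (p : ℕ) (hp : p.Prime) (s : ℕ) (G : Type) [AddCommGroup G]
    (L : AddSubgroup G) :
    ∑' lam : Multiset ℕ+, (if Nonempty ((G ⧸ L) ≃+ CLGroup p lam) then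
      ((Nat.card (CLGroup p lam) : ℝ≥0∞) ^ s)⁻¹ else 0) = wt p s L.index := by
  unfold wt
  split_ifs with h
  · obtain ⟨k, hk⟩ := h
    obtain ⟨lam, ⟨f⟩⟩ := exists_clgroup p hp (G ⧸ L) k hk
    rw [tsum_eq_single lam]
    · rw [if_pos ⟨f⟩, ← Nat.card_congr f.toEquiv]; rfl
    · intro mu hmu
      rw [if_neg]
      rintro ⟨g⟩
      exact hmu (clgroup_unique p hp _ _ (g.symm.trans f))
  · rw [ENNReal.tsum_eq_zero]
    intro lam
    rw [if_neg]
    rintro ⟨f⟩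
    obtain ⟨k, hk⟩ := card_clgroup p lam
    exact h ⟨k, hk ▸ Nat.card_congr f.toEquiv⟩

lemma term_eq (a k c n t q u r : ℕ) (ha : a ≠ 0) (hk : k ≠ 0) (hc : c ≠ 0) (hq : q ≠ 0)
    (h : t * k ^ r = n * a * q ^ r) :
    ((c : ℝ≥0∞))⁻¹ * ((q : ℝ≥0∞) ^ u)⁻¹ * n =
      (a : ℝ≥0∞)⁻¹ * (k : ℝ≥0∞) ^ r * ((t : ℝ≥0∞) * ((c : ℝ≥0∞)⁻¹ * ((q : ℝ≥0∞) ^ (u + r))⁻¹)) := by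
  have h' : (t : ℝ≥0∞) * (k : ℝ≥0∞) ^ r = n * a * (q : ℝ≥0∞) ^ r := by exact_mod_cast h
  have ha' : (a : ℝ≥0∞) ≠ 0 := by exact_mod_cast ha
  have hq' : (q : ℝ≥0∞) ^ r ≠ 0 := pow_ne_zero _ (by exact_mod_cast hq)
  have e1 : (a : ℝ≥0∞)⁻¹ * a = 1 := ENNReal.inv_mul_cancel ha' (by finiteness)
  have e2 : ((q : ℝ≥0∞) ^ r)⁻¹ * (q : ℝ≥0∞) ^ r = 1 := ENNReal.inv_mul_cancel hq' (by finiteness)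
  have e3 : ((q : ℝ≥0∞) ^ (u + r))⁻¹ = ((q : ℝ≥0∞) ^ u)⁻¹ * ((q : ℝ≥0∞) ^ r)⁻¹ := by
    rw [pow_add, ENNReal.mul_inv]
    · right; finiteness
    · left; finiteness
  rw [e3]
  calc _ = ((c : ℝ≥0∞))⁻¹ * ((q : ℝ≥0∞) ^ u)⁻¹ * n * ((a : ℝ≥0∞)⁻¹ * a) *
        (((q : ℝ≥0∞) ^ r)⁻¹ * (q : ℝ≥0∞) ^ r) := by rw [e1, e2, mul_one, mul_one]
    _ = (a : ℝ≥0∞)⁻¹ * ((c : ℝ≥0∞))⁻¹ * ((q : ℝ≥0∞) ^ u)⁻¹ * ((q : ℝ≥0∞) ^ r)⁻¹ *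
        (n * a * (q : ℝ≥0∞) ^ r) := by ring
    _ = _ := by rw [← h']; ring

lemma wt_shift (p : ℕ) (hp : p.Prime) (u r n : ℕ) :
    wt p (u + r) n * (n : ℝ≥0∞) ^ r = wt p u n := by
  unfold wt
  split_ifs with h
  · obtain ⟨k, rfl⟩ := h
    have h0 : ((p ^ k : ℕ) : ℝ≥0∞) ^ r ≠ 0 :=
      pow_ne_zero _ (by exact_mod_cast pow_ne_zero k hp.ne_zero)
    rw [pow_add, ENNReal.mul_inv, mul_assoc, ENNReal.inv_mul_cancel h0 (by finiteness), mul_one]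
    · right; finiteness
    · left; finiteness
  · simp

lemma ennreal_main (p : ℕ) (hp : p.Prime) (u : ℕ) (K : Type) [AddCommGroup K] [Finite K]
    (hK : ∃ n : ℕ, Nat.card K = p ^ n) :
    ∑' lam : Multiset ℕ+, (numAut (CLGroup p lam) : ℝ≥0∞)⁻¹ *
        ((Nat.card (CLGroup p lam) : ℝ≥0∞) ^ u)⁻¹ * (Nat.card (NSet u (CLGroup p lam) K) : ℝ≥0∞) =
      (numAut K : ℝ≥0∞)⁻¹ * ((Nat.card K : ℝ≥0∞) ^ u)⁻¹ *
        ∏ i ∈ Finset.range u, (1 - ((p : ℝ≥0∞) ^ u)⁻¹ * (p : ℝ≥0∞) ^ i)⁻¹ := by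
  obtain ⟨r, f, hf⟩ := Module.Finite.exists_fin' ℤ K
  set R := f.toAddMonoidHom.ker with hR
  let e : ((Fin r → ℤ) ⧸ R) ≃+ K := QuotientAddGroup.quotientKerEquivOfSurjective f.toAddMonoidHom hf
  have hRi : R.index = Nat.card K := Nat.card_congr e.toEquiv
  have hcK : Nat.card K ≠ 0 := Nat.card_pos.ne'
  have step1 : ∀ lam : Multiset ℕ+, (numAut (CLGroup p lam) : ℝ≥0∞)⁻¹ *
        ((Nat.card (CLGroup p lam) : ℝ≥0∞) ^ u)⁻¹ * (Nat.card (NSet u (CLGroup p lam) K) : ℝ≥0∞) =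
      (numAut K : ℝ≥0∞)⁻¹ * (Nat.card K : ℝ≥0∞) ^ r *
        ∑' L : AddSubgroup ((Fin u → ℤ) × (Fin r → ℤ)),
          (if L.map (AddMonoidHom.snd _ _) = R then 1 else 0) *
          (if Nonempty ((((Fin u → ℤ) × (Fin r → ℤ)) ⧸ L) ≃+ CLGroup p lam) then
            ((Nat.card (CLGroup p lam) : ℝ≥0∞) ^ (u + r))⁻¹ else 0) := by
    intro lam
    have := finite_clgroup p hp lam
    have hA := numAut_ne_zero (CLGroup p lam)
    rw [term_eq _ _ _ _ _ _ u r (numAut_ne_zero K) hcK hA Nat.card_pos.ne'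
      (card_TSet u r R (CLGroup p lam) K e), card_TSet_ennreal, ← ENNReal.tsum_mul_right]
    congr 1
    refine tsum_congr fun L => ?_
    have hA' : (numAut (CLGroup p lam) : ℝ≥0∞) * (numAut (CLGroup p lam) : ℝ≥0∞)⁻¹ = 1 :=
      ENNReal.mul_inv_cancel (by exact_mod_cast hA) (by finiteness)
    by_cases h1 : L.map (AddMonoidHom.snd _ _) = R
    · by_cases h2 : Nonempty ((((Fin u → ℤ) × (Fin r → ℤ)) ⧸ L) ≃+ CLGroup p lam)
      · rw [if_pos ⟨h1, h2⟩, if_pos h1, if_pos h2, ← mul_assoc, hA']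
      · rw [if_neg (fun h => h2 h.2), if_neg h2, zero_mul, mul_zero]
    · rw [if_neg (fun h => h1 h.1), if_neg h1, zero_mul, zero_mul]
  simp_rw [step1]
  rw [ENNReal.tsum_mul_left, ENNReal.tsum_comm]
  simp_rw [ENNReal.tsum_mul_left, tsum_clgroup p hp]
  rw [tsum_prod_sub p hp (u + r) r (Fin u → ℤ) (fun R' => if R' = R then 1 else 0)]
  simp_rw [wt_shift p hp]
  rw [tsum_eq_single R (by intro R' h; simp [h]), hRi]
  change _ * (zt p u (Fin u → ℤ) * _) = _
  rw [zt_pi p hp, if_pos rfl, one_mul]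
  have hw : wt p u (Nat.card K) = ((Nat.card K : ℝ≥0∞) ^ u)⁻¹ := if_pos hK
  rw [← hw, ← wt_shift p hp u r]
  ring

lemma clProd_zero (p : ℕ) (hp : p.Prime) (u : ℕ) :
    clProd p 0 = (∏ i ∈ Finset.range u, (1 - ((p : ℝ) ^ (i + 1))⁻¹)) * clProd p u := by
  unfold clProd
  have h (v k : ℕ) : (1 - (p : ℝ) ^ (-((k : ℤ) + 1 + v))) = 1 - ((p : ℝ) ^ (k + v + 1))⁻¹ := by
    rw [zpow_neg]; congr 2; norm_cast; congr 1; ring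
  simp_rw [h]
  have hm : Multipliable fun k : ℕ => 1 - ((p : ℝ) ^ (k + u + 1))⁻¹ := by
    have hs : Summable fun k : ℕ => -((p : ℝ) ^ (k + u + 1))⁻¹ := by
      apply Summable.neg
      have hp1 : ((p : ℝ))⁻¹ < 1 := inv_lt_one_of_one_lt₀ (by exact_mod_cast hp.one_lt)
      have := (summable_geometric_of_lt_one (by positivity) hp1)
      have := (summable_nat_add_iff (u + 1)).2 this
      simpa [inv_pow, add_assoc] using this
    simpa [sub_eq_add_neg] using Real.multipliable_one_add_of_summable hs
  exact (Multipliable.prod_mul_tprod_nat_mul' (f := fun k : ℕ => 1 - ((p : ℝ) ^ (k + 1))⁻¹)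
    hm).symm

lemma toReal_prod (p : ℕ) (hp : p.Prime) (u : ℕ) :
    (∏ i ∈ Finset.range u, (1 - ((p : ℝ≥0∞) ^ u)⁻¹ * (p : ℝ≥0∞) ^ i)⁻¹).toReal =
      (∏ i ∈ Finset.range u, (1 - ((p : ℝ) ^ (i + 1))⁻¹))⁻¹ := by
  rw [ENNReal.toReal_prod, ← Finset.prod_range_reflect, ← Finset.prod_inv_distrib]
  refine Finset.prod_congr rfl fun i hi => ?_
  rw [Finset.mem_range] at hi
  have hp0 : (p : ℝ≥0∞) ≠ 0 := by exact_mod_cast hp.ne_zero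
  have e : ((p : ℝ≥0∞) ^ u)⁻¹ * (p : ℝ≥0∞) ^ (u - 1 - i) = ((p : ℝ≥0∞) ^ (i + 1))⁻¹ := by
    have hu : u = (i + 1) + (u - 1 - i) := by omega
    conv_lhs => rw [hu]
    have h2 : i + 1 + (u - 1 - i) - 1 - i = u - 1 - i := by omega
    rw [h2, pow_add, ENNReal.mul_inv, mul_assoc, ENNReal.inv_mul_cancel (pow_ne_zero _ hp0)
      (by finiteness), mul_one]
    · right; finiteness
    · left; finiteness
  rw [e, ENNReal.toReal_inv, ENNReal.toReal_sub_of_le]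
  · simp
  · rw [ENNReal.inv_le_one]
    exact_mod_cast Nat.one_le_pow _ _ hp.pos
  · simp

end Assembly

end CLProof


/-- If `B` is chosen at random according to `μ^0` and `b_1, …, b_u` are chosen uniformly and
independently in `B`, then `B/⟨b_1,…,b_u⟩` is distributed according to `μ^u`:
for every finite abelian `p`-group `K`,
`∑_B μ^0(B) · |B|^{-u} · #{(b_1,…,b_u) ∈ B^u : B/⟨b_1,…,b_u⟩ ≅ K} = μ^u(K)`. -/
theorem cl_quotient_distribution (p : ℕ) (hp : p.Prime) (hodd : Odd p) (u : ℕ)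
    (K : Type) [AddCommGroup K] (hK : ∃ n : ℕ, Nat.card K = p ^ n) :
    ∑' lam : Multiset ℕ+,
      clMeasure p 0 (CLGroup p lam) * ((Nat.card (CLGroup p lam) : ℝ) ^ u)⁻¹ *
        (Nat.card {b : Fin u → CLGroup p lam //
          Nonempty ((CLGroup p lam ⧸ AddSubgroup.closure (Set.range b)) ≃+ K)} : ℝ)
      = clMeasure p u K := by
  obtain ⟨n, hn⟩ := hK
  have hfin : Finite K := Nat.finite_of_card_ne_zero (by rw [hn]; exact pow_ne_zero _ hp.ne_zero)
  have key := congrArg ENNReal.toReal (CLProof.ennreal_main p hp u K ⟨n, hn⟩)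
  rw [ENNReal.tsum_toReal_eq, ENNReal.toReal_mul, CLProof.toReal_prod p hp] at key
  · have hterm : ∀ lam : Multiset ℕ+,
        clMeasure p 0 (CLGroup p lam) * ((Nat.card (CLGroup p lam) : ℝ) ^ u)⁻¹ *
        (Nat.card {b : Fin u → CLGroup p lam //
          Nonempty ((CLGroup p lam ⧸ AddSubgroup.closure (Set.range b)) ≃+ K)} : ℝ) =
        clProd p 0 * ((numAut (CLGroup p lam) : ENNReal)⁻¹ *
        ((Nat.card (CLGroup p lam) : ENNReal) ^ u)⁻¹ *
          (Nat.card (CLProof.NSet u (CLGroup p lam) K) : ENNReal)).toReal := by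
      intro lam
      simp only [clMeasure, ENNReal.toReal_mul, ENNReal.toReal_inv, ENNReal.toReal_pow,
        ENNReal.toReal_natCast, pow_zero, inv_one, one_mul]
      ring
    simp_rw [hterm]
    rw [tsum_mul_left, key, CLProof.clProd_zero p hp u]
    have hne : (∏ i ∈ Finset.range u, (1 - ((p : ℝ) ^ (i + 1))⁻¹)) ≠ 0 := by
      refine Finset.prod_ne_zero_iff.2 fun i _ => ?_
      have : ((p : ℝ) ^ (i + 1))⁻¹ < 1 :=
        inv_lt_one_of_one_lt₀ (one_lt_pow₀ (by exact_mod_cast hp.one_lt) (by omega))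
      linarith
    simp only [clMeasure, ENNReal.toReal_mul, ENNReal.toReal_inv, ENNReal.toReal_pow,
        ENNReal.toReal_natCast]
    generalize (∏ i ∈ Finset.range u, (1 - ((p : ℝ) ^ (i + 1))⁻¹)) = P at hne
    field_simp
  · intro lam
    have := CLProof.finite_clgroup p hp lam
    have h1 : (numAut (CLGroup p lam) : ENNReal) ≠ 0 := by
      exact_mod_cast CLProof.numAut_ne_zero (CLGroup p lam)
    have h2 : (Nat.card (CLGroup p lam) : ENNReal) ^ u ≠ 0 :=
      pow_ne_zero _ (by exact_mod_cast Nat.card_pos.ne')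
    finiteness
end

section
/- For every finite abelian p-group A and every a ∈ A, one has ∑_B (μ^0(B)/|B|) · ∑_{b ∈ B} |Sur((B,b),(A,a))| = 1/|A|, where the outer sum runs over isomorphism classes of finite abelian p-groups B. (Equivalently: the (A,a)-moment of the pointed Cohen–Lenstra measure μ, i.e. ∑_{(B,b)} |Sur((B,b),(A,a))| μ(B,b) over isomorphism classes of pointed finite abelian p-groups, equals 1/|A|.) -/
/-!
Cohen–Lenstra moments: for every integer `u ≥ 0` and every finite abelian `p`-group `A`,
the sum over isomorphism classes of finite abelian `p`-groups `B` of `|Sur(B,A)| · μ^u(B)`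
equals `|A|^{-u}`.
-/

open scoped Classical

/-- The number of surjective group homomorphisms `B → A` sending `b` to `a`. -/
noncomputable def numPointedSur (B : Type*) [AddCommGroup B] (b : B)
    (A : Type*) [AddCommGroup A] (a : A) : ℕ :=
  Nat.card {f : B →+ A // Function.Surjective f ∧ f b = a}


open scoped ENNReal

/-- Subgroups of `p`-power index. -/
abbrev PSub (p : ℕ) (M : Type*) [AddCommGroup M] : Type _ :=
  {L : AddSubgroup M // ∃ m : ℕ, L.index = p ^ m}

/-- Zeta function of subgroups of `p`-power index. -/
noncomputable def zf (p : ℕ) (M : Type*) [AddCommGroup M] (s : ℕ) : ℝ≥0∞ :=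
  ∑' L : PSub p M, ((L.1.index : ℝ≥0∞) ^ s)⁻¹

lemma zf_congr (p : ℕ) {M N : Type*} [AddCommGroup M] [AddCommGroup N] (e : M ≃+ N) (s : ℕ) :
    zf p M s = zf p N s := by
  have hidx : ∀ L : AddSubgroup M, (e.mapAddSubgroup L).index = L.index := by
    intro L
    exact AddSubgroup.index_map_equiv L e
  let E : PSub p M ≃ PSub p N := e.mapAddSubgroup.toEquiv.subtypeEquiv (by
    intro L
    show _ ↔ ∃ m, (e.mapAddSubgroup L).index = p ^ m
    rw [hidx])
  unfold zf
  rw [← E.tsum_eq]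
  refine tsum_congr fun L => ?_
  show _ = ((((e.mapAddSubgroup L.1).index : ℕ) : ℝ≥0∞) ^ s)⁻¹
  rw [hidx]

lemma zf_zero (p : ℕ) {M : Type*} [AddCommGroup M] [Subsingleton M] (s : ℕ) : zf p M s = 1 := by
  have h1 : ∀ L : AddSubgroup M, L.index = 1 := fun L => by
    rw [Subsingleton.elim L ⊤]; simp
  have : Unique (PSub p M) := ⟨⟨⟨⊤, 0, by simp⟩⟩, fun L => Subtype.ext (Subsingleton.elim _ _)⟩
  unfold zf
  rw [tsum_fintype, Fintype.sum_unique, h1]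
  simp

/-- index formula in a product -/
lemma index_prod_int {M : Type*} [AddCommGroup M] (L : AddSubgroup (M × ℤ)) :
    L.index = (L.comap (AddMonoidHom.inl M ℤ)).index * (L.map (AddMonoidHom.snd M ℤ)).index := by
  have hk : (AddMonoidHom.snd M ℤ).ker = (AddMonoidHom.inl M ℤ).range := by
    ext ⟨a, b⟩
    rw [AddMonoidHom.mem_ker, AddMonoidHom.mem_range]
    simp [eq_comm]
  have hr : (AddMonoidHom.snd M ℤ).range = ⊤ := by
    rw [AddMonoidHom.range_eq_top]; exact fun z => ⟨(0, z), rfl⟩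
  rw [AddSubgroup.index_map, AddSubgroup.index_comap, hr, AddSubgroup.index_top, mul_one, hk,
    ← AddSubgroup.relIndex_sup_left,
    AddSubgroup.relIndex_mul_index le_sup_left]

/-- The sublattice with given data. -/
def lat (p : ℕ) {M : Type*} [AddCommGroup M] (L : AddSubgroup M) (k : ℕ) (x : M ⧸ L) :
    AddSubgroup (M × ℤ) where
  carrier := {z | ∃ c : ℤ, z.2 = (p : ℤ) ^ k * c ∧ (z.1 : M ⧸ L) = c • x}
  zero_mem' := ⟨0, by simp⟩
  add_mem' := by
    rintro ⟨a, b⟩ ⟨a', b'⟩ ⟨c, h1, h2⟩ ⟨c', h1', h2'⟩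
    refine ⟨c + c', ?_, ?_⟩
    · simp only [Prod.mk_add_mk] at *; rw [h1, h1']; ring
    · simp only [Prod.mk_add_mk] at *
      rw [QuotientAddGroup.mk_add, h2, h2', add_smul]
  neg_mem' := by
    rintro ⟨a, b⟩ ⟨c, h1, h2⟩
    refine ⟨-c, ?_, ?_⟩
    · simp only [Prod.neg_mk] at *; rw [h1]; ring
    · simp only [Prod.neg_mk] at *
      rw [QuotientAddGroup.mk_neg, h2, neg_smul]

lemma mem_lat (p : ℕ) {M : Type*} [AddCommGroup M] (L : AddSubgroup M) (k : ℕ) (x : M ⧸ L)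
    (z : M × ℤ) : z ∈ lat p L k x ↔
      ∃ c : ℤ, z.2 = (p : ℤ) ^ k * c ∧ (z.1 : M ⧸ L) = c • x := Iff.rfl

lemma lat_comap {p : ℕ} (hp : p.Prime) {M : Type*} [AddCommGroup M] (L : AddSubgroup M) (k : ℕ)
    (x : M ⧸ L) : (lat p L k x).comap (AddMonoidHom.inl M ℤ) = L := by
  have : (p : ℤ) ≠ 0 := by exact_mod_cast hp.ne_zero
  ext y
  rw [AddSubgroup.mem_comap, mem_lat]
  constructor
  · rintro ⟨c, h1, h2⟩
    have h3 : (p : ℤ) ^ k * c = 0 := h1.symm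
    have : c = 0 := (mul_eq_zero.1 h3).resolve_left (pow_ne_zero _ this)
    subst this
    simpa using h2
  · intro hy
    exact ⟨0, by simp, by simpa using hy⟩

lemma lat_map {p : ℕ} {M : Type*} [AddCommGroup M] (L : AddSubgroup M) (k : ℕ)
    (x : M ⧸ L) : (lat p L k x).map (AddMonoidHom.snd M ℤ) = AddSubgroup.zmultiples ((p : ℤ) ^ k) := by
  obtain ⟨m, rfl⟩ := QuotientAddGroup.mk_surjective x
  ext t
  rw [AddSubgroup.mem_map, AddSubgroup.mem_zmultiples_iff]
  constructor
  · rintro ⟨z, ⟨c, h1, h2⟩, rfl⟩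
    exact ⟨c, by simp [h1, mul_comm]⟩
  · rintro ⟨c, rfl⟩
    exact ⟨(c • m, c • (p : ℤ) ^ k), ⟨c, by simp [mul_comm], by simp⟩, rfl⟩

lemma lat_index {p : ℕ} (hp : p.Prime) {M : Type*} [AddCommGroup M] (L : AddSubgroup M) (k : ℕ)
    (x : M ⧸ L) : (lat p L k x).index = L.index * p ^ k := by
  rw [index_prod_int, lat_comap hp, lat_map, Int.index_zmultiples]
  simp

/-- The parametrization of sublattices. -/
noncomputable def latF {p : ℕ} (hp : p.Prime) (M : Type*) [AddCommGroup M] :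
    (Σ L : PSub p M, ℕ × (M ⧸ L.1)) → PSub p (M × ℤ) := fun d =>
  ⟨lat p d.1.1 d.2.1 d.2.2, by
    obtain ⟨⟨L, m, h⟩, k, x⟩ := d
    exact ⟨m + k, by rw [lat_index hp, pow_add, ← h]⟩⟩

lemma latF_bij {p : ℕ} (hp : p.Prime) (M : Type*) [AddCommGroup M] :
    Function.Bijective (latF hp M) := by
  have hp0 : (p : ℤ) ≠ 0 := by exact_mod_cast hp.ne_zero
  constructor
  · rintro ⟨⟨L, hL⟩, k, x⟩ ⟨⟨L', hL'⟩, k', x'⟩ h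
    have h : lat p L k x = lat p L' k' x' := congrArg Subtype.val h
    have h1 : L = L' := by rw [← lat_comap hp L k x, h, lat_comap hp]
    subst h1
    have h2 : k = k' := by
      have := lat_index hp L k x
      rw [h, lat_index hp] at this
      obtain ⟨m, hm⟩ := hL
      have h0 : L.index ≠ 0 := by rw [hm]; exact pow_ne_zero _ hp.ne_zero
      exact (Nat.pow_right_injective hp.two_le (Nat.eq_of_mul_eq_mul_left (Nat.pos_of_ne_zero h0) this)).symm
    subst h2
    have h3 : x = x' := by
      obtain ⟨m, rfl⟩ := QuotientAddGroup.mk_surjective x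
      have : (m, (p : ℤ) ^ k) ∈ lat p L k (m : M ⧸ L) := ⟨1, by simp, by simp⟩
      rw [h, mem_lat] at this
      obtain ⟨c, h1, h2⟩ := this
      have : c = 1 := by
        have : (p : ℤ) ^ k * c = p ^ k * 1 := by simpa using h1.symm
        exact mul_left_cancel₀ (pow_ne_zero _ hp0) this
      subst this
      simpa using h2
    subst h3
    rfl
  · rintro ⟨K, m, hK⟩
    have hidx := index_prod_int K
    obtain ⟨i, -, hi⟩ := (Nat.dvd_prime_pow hp).1 (hK ▸ Dvd.intro _ hidx.symm)
    obtain ⟨k, -, hk⟩ := (Nat.dvd_prime_pow hp).1 (hK ▸ Dvd.intro_left _ hidx.symm)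
    have hz : K.map (AddMonoidHom.snd M ℤ) = AddSubgroup.zmultiples ((p : ℤ) ^ k) := by
      obtain ⟨g, hg⟩ := Int.subgroup_cyclic (K.map (AddMonoidHom.snd M ℤ))
      rw [← AddSubgroup.zmultiples_eq_closure] at hg
      rw [hg, Int.index_zmultiples] at hk
      rw [hg, ← Int.zmultiples_natAbs, hk]
      simp
    have : (p : ℤ) ^ k ∈ K.map (AddMonoidHom.snd M ℤ) := by
      rw [hz]; exact AddSubgroup.mem_zmultiples _
    obtain ⟨⟨y, t⟩, hy, ht⟩ := this
    have ht : t = (p : ℤ) ^ k := ht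
    subst ht
    refine ⟨⟨⟨K.comap (AddMonoidHom.inl M ℤ), i, hi⟩, k, (y : M ⧸ _)⟩, Subtype.ext ?_⟩
    show lat p (K.comap (AddMonoidHom.inl M ℤ)) k (y : M ⧸ _) = K
    ext ⟨a, b⟩
    rw [mem_lat]
    constructor
    · rintro ⟨c, h1, h2⟩
      simp only at h1 h2
      rw [← QuotientAddGroup.mk_zsmul, QuotientAddGroup.eq_iff_sub_mem, AddSubgroup.mem_comap] at h2
      have := K.add_mem h2 (K.zsmul_mem hy c)
      convert this using 1
      ext <;> simp [h1, mul_comm]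
    · intro hab
      have : b ∈ K.map (AddMonoidHom.snd M ℤ) := ⟨(a, b), hab, rfl⟩
      rw [hz, AddSubgroup.mem_zmultiples_iff] at this
      obtain ⟨c, rfl⟩ := this
      refine ⟨c, by simp [mul_comm], ?_⟩
      simp only
      rw [← QuotientAddGroup.mk_zsmul, QuotientAddGroup.eq_iff_sub_mem, AddSubgroup.mem_comap]
      convert K.sub_mem hab (K.zsmul_mem hy c) using 1
      ext <;> simp

lemma zf_prod {p : ℕ} (hp : p.Prime) (M : Type*) [AddCommGroup M] (s : ℕ) :
    zf p (M × ℤ) (s + 1) = zf p M s * (1 - ((p : ℝ≥0∞)⁻¹) ^ (s + 1))⁻¹ := by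
  have hpE : (p : ℝ≥0∞) ≠ 0 := by exact_mod_cast hp.ne_zero
  unfold zf
  rw [← (Equiv.ofBijective _ (latF_bij hp M)).tsum_eq, ENNReal.tsum_sigma', ← ENNReal.tsum_mul_right]
  refine tsum_congr fun L => ?_
  obtain ⟨L, m, hL⟩ := L
  have h0 : L.index ≠ 0 := by rw [hL]; exact pow_ne_zero _ hp.ne_zero
  have h0E : (L.index : ℝ≥0∞) ≠ 0 := by exact_mod_cast h0
  have : Finite (M ⧸ L) := by
    have : L.FiniteIndex := ⟨h0⟩
    infer_instance
  have key : ∀ (k : ℕ) (x : M ⧸ L),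
      (((((Equiv.ofBijective _ (latF_bij hp M)) ⟨⟨L, m, hL⟩, (k, x)⟩ : PSub p (M × ℤ)).1.index : ℕ)
        : ℝ≥0∞) ^ (s + 1))⁻¹ =
        ((L.index : ℝ≥0∞) ^ (s + 1))⁻¹ * (((p : ℝ≥0∞)⁻¹) ^ (s + 1)) ^ k := by
    intro k x
    show ((((lat p L k x).index : ℕ) : ℝ≥0∞) ^ (s + 1))⁻¹ = _
    rw [lat_index hp]
    push_cast
    rw [mul_pow, ENNReal.mul_inv (by left; positivity) (by left; finiteness), ← pow_mul, mul_comm k, pow_mul, ENNReal.inv_pow,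
      ENNReal.inv_pow, ENNReal.inv_pow]
  rw [ENNReal.tsum_prod']
  calc _ = ∑' (k : ℕ) (x : M ⧸ L), ((L.index : ℝ≥0∞) ^ (s + 1))⁻¹ * (((p : ℝ≥0∞)⁻¹) ^ (s + 1)) ^ k :=
        tsum_congr fun k => tsum_congr fun x => key k x
    _ = ∑' k : ℕ, ((L.index : ℝ≥0∞) ^ s)⁻¹ * (((p : ℝ≥0∞)⁻¹) ^ (s + 1)) ^ k := by
        refine tsum_congr fun k => ?_
        rw [ENNReal.tsum_const, ENat.card_eq_coe_natCard, ← mul_assoc]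
        congr 1
        show ((L.index : ℕ∞) : ℝ≥0∞) * _ = _
        rw [pow_succ', ENNReal.mul_inv (by left; exact h0E) (by left; finiteness), ← mul_assoc]
        simp only [ENat.toENNReal_coe]
        rw [ENNReal.mul_inv_cancel h0E (by finiteness), one_mul]
    _ = _ := by
        rw [ENNReal.tsum_mul_left, ENNReal.tsum_geometric]

lemma zf_pi {p : ℕ} (hp : p.Prime) (n : ℕ) :
    zf p (Fin n → ℤ) n = ∏ i ∈ Finset.range n, (1 - ((p : ℝ≥0∞)⁻¹) ^ (i + 1))⁻¹ := by
  induction n with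
  | zero => rw [zf_zero]; simp
  | succ n ih =>
    rw [Finset.prod_range_succ, ← ih, ← zf_prod hp]
    refine zf_congr p ?_ _
    exact ((Fin.consLinearEquiv ℤ (fun _ : Fin (n+1) => ℤ)).symm.trans (LinearEquiv.prodComm ℤ _ _)).toAddEquiv

lemma minsum_count (lam : Multiset ℕ+) (k : ℕ+) :
    (lam.map fun a : ℕ+ => min ((k : ℕ) - 1) (a : ℕ)).sum + (lam.map fun a : ℕ+ => min ((k : ℕ) + 1) (a : ℕ)).sum
      + lam.count k = 2 * (lam.map fun a : ℕ+ => min (k : ℕ) (a : ℕ)).sum := by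
  induction lam using Multiset.induction with
  | empty => simp
  | cons a s ih =>
    simp only [Multiset.map_cons, Multiset.sum_cons, Multiset.count_cons]
    have hk := k.pos
    by_cases h : k = a
    · subst h; simp; omega
    · have h' : (k : ℕ) ≠ a := fun h' => h (PNat.eq h')
      simp only [h, if_false]; omega

lemma lam_ext {lam mu : Multiset ℕ+}
    (h : ∀ k : ℕ, (lam.map fun a : ℕ+ => min k (a : ℕ)).sum = (mu.map fun a : ℕ+ => min k (a : ℕ)).sum) :
    lam = mu := by
  ext k
  have h1 := minsum_count lam k
  have h2 := minsum_count mu k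
  rw [h, h, h] at h1
  omega

lemma card_tor {p : ℕ} (hp : p.Prime) (k e : ℕ) :
    Nat.card {x : ZMod (p ^ e) // p ^ k • x = 0} = p ^ (min k e) := by
  have : NeZero (p ^ e) := ⟨pow_ne_zero _ hp.ne_zero⟩
  have := IsAddCyclic.card_nsmulAddMonoidHom_ker (G := ZMod (p ^ e)) (p ^ k)
  rw [Nat.card_zmod] at this
  have h2 : Nat.gcd (p ^ e) (p ^ k) = p ^ (min k e) := by
    rcases le_total k e with h | h
    · rw [min_eq_left h, Nat.gcd_eq_right (pow_dvd_pow _ h)]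
    · rw [min_eq_right h, Nat.gcd_eq_left (pow_dvd_pow _ h)]
  rw [← h2, ← this]
  rfl

lemma card_tor_CL {p : ℕ} (hp : p.Prime) (k : ℕ) (lam : Multiset ℕ+) :
    Nat.card {x : CLGroup p lam // p ^ k • x = 0} = p ^ (lam.map fun a : ℕ+ => min k (a : ℕ)).sum := by
  let E : {x : CLGroup p lam // p ^ k • x = 0} ≃
      (∀ i : Fin lam.toList.length, {x : ZMod (p ^ ((lam.toList.get i : ℕ+) : ℕ)) // p ^ k • x = 0}) :=
    { toFun := fun x i => ⟨x.1 i, congrFun x.2 i⟩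
      invFun := fun y => ⟨fun i => (y i).1, funext fun i => (y i).2⟩
      left_inv := fun x => rfl
      right_inv := fun y => rfl }
  rw [Nat.card_congr E, Nat.card_pi]
  simp_rw [card_tor hp]
  rw [Finset.prod_pow_eq_pow_sum]
  congr 1
  conv_rhs => rw [← Multiset.coe_toList lam, Multiset.map_coe, Multiset.sum_coe]
  rw [← List.sum_ofFn]
  congr 1
  apply List.ext_get <;> simp

lemma CL_unique {p : ℕ} (hp : p.Prime) {lam mu : Multiset ℕ+}
    (e : CLGroup p lam ≃+ CLGroup p mu) : lam = mu := by
  apply lam_ext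
  intro k
  apply Nat.pow_right_injective hp.two_le
  simp only
  rw [← card_tor_CL hp, ← card_tor_CL hp]
  refine Nat.card_congr (e.toEquiv.subtypeEquiv fun x => ?_)
  show _ ↔ p ^ k • e x = 0
  rw [← map_nsmul, EmbeddingLike.map_eq_zero_iff]

instance CL_finite (p : ℕ) [NeZero p] (lam : Multiset ℕ+) : Finite (CLGroup p lam) := by
  have : ∀ e : ℕ, NeZero (p ^ e) := fun e => ⟨pow_ne_zero _ (NeZero.ne p)⟩
  unfold CLGroup
  infer_instance

lemma CL_card {p : ℕ} (lam : Multiset ℕ+) :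
    Nat.card (CLGroup p lam) = p ^ (lam.map fun a : ℕ+ => (a : ℕ)).sum := by
  unfold CLGroup
  rw [Nat.card_pi]
  simp_rw [Nat.card_zmod]
  rw [Finset.prod_pow_eq_pow_sum]
  congr 1
  conv_rhs => rw [← Multiset.coe_toList lam, Multiset.map_coe, Multiset.sum_coe]
  rw [← List.sum_ofFn]
  congr 1
  apply List.ext_get <;> simp

lemma exists_equiv_of_map_eq {α β γ : Type} [Fintype α] [Fintype β] (f : α → γ) (g : β → γ)
    (h : (Finset.univ : Finset α).val.map f = (Finset.univ : Finset β).val.map g) :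
    ∃ σ : α ≃ β, ∀ a, g (σ a) = f a := by
  have key : ∀ c, Nonempty ({a // f a = c} ≃ {b // g b = c}) := by
    intro c
    rw [← Fintype.card_eq, Fintype.card_subtype, Fintype.card_subtype]
    have := congrArg (Multiset.count c) h
    rw [Multiset.count_map, Multiset.count_map] at this
    simp only [Finset.card_def, Finset.filter_val]
    simpa [eq_comm] using this
  let E := fun c => (key c).some
  refine ⟨(Equiv.sigmaFiberEquiv f).symm.trans ((Equiv.sigmaCongrRight E).trans (Equiv.sigmaFiberEquiv g)), ?_⟩
  intro a
  exact (E (f a) ⟨a, rfl⟩).2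

noncomputable def pi_zmod_reindex {α β : Type} (f : α → ℕ) (g : β → ℕ) (σ : α ≃ β)
    (h : ∀ a, g (σ a) = f a) : (∀ b, ZMod (g b)) ≃+ (∀ a, ZMod (f a)) := by
  obtain rfl : f = fun a => g (σ a) := funext fun a => (h a).symm
  exact (LinearEquiv.piCongrLeft ℤ (fun b => ZMod (g b)) σ).symm.toAddEquiv

lemma CL_exists {p : ℕ} (hp : p.Prime) (B : Type*) [AddCommGroup B] (hB : ∃ m, Nat.card B = p ^ m) :
    ∃ lam : Multiset ℕ+, Nonempty (B ≃+ CLGroup p lam) := by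
  obtain ⟨m, hm⟩ := hB
  have : Finite B := Nat.finite_of_card_ne_zero (by rw [hm]; exact pow_ne_zero _ hp.ne_zero)
  obtain ⟨ι, hι, n, hn, ⟨e⟩⟩ := AddCommGroup.equiv_directSum_zmod_of_finite' B
  have e : B ≃+ (∀ i, ZMod (n i)) := e.trans (DirectSum.addEquivProd _)
  have hc : p ^ m = ∏ i, n i := by
    rw [← hm, Nat.card_congr e.toEquiv, Nat.card_pi]; simp
  have h1 : ∀ i, ∃ k : ℕ+, n i = p ^ (k : ℕ) := by
    intro i
    have : n i ∣ p ^ m := hc ▸ Finset.dvd_prod_of_mem n (Finset.mem_univ i)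
    obtain ⟨k, -, hk⟩ := (Nat.dvd_prime_pow hp).1 this
    have hk0 : 0 < k := by
      rcases Nat.eq_zero_or_pos k with h | h
      · have := hn i; rw [hk, h] at this; simp at this
      · exact h
    exact ⟨⟨k, hk0⟩, hk⟩
  choose k hk using h1
  obtain rfl : n = fun i => p ^ (k i : ℕ) := funext hk
  let lam : Multiset ℕ+ := Finset.univ.val.map k
  refine ⟨lam, ?_⟩
  obtain ⟨σ, hσ⟩ := exists_equiv_of_map_eq (α := Fin lam.toList.length) (fun i => lam.toList.get i) k (by
    show _ = lam
    rw [Fin.univ_val_map, List.ofFn_get, Multiset.coe_toList])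
  exact ⟨e.trans (pi_zmod_reindex (fun i => p ^ ((lam.toList.get i : ℕ+) : ℕ)) (fun j => p ^ (k j : ℕ)) σ fun i => by rw [hσ])⟩

/-- surjections -/
abbrev Sur (B A : Type*) [AddCommGroup B] [AddCommGroup A] : Type _ :=
  {f : B →+ A // Function.Surjective f}

/-- Homomorphisms from a free group. -/
noncomputable def homEquiv (n : ℕ) (B : Type*) [AddCommGroup B] :
    ((Fin n → ℤ) →+ B) ≃ (Fin n → B) :=
  (addMonoidHomLequivInt ℤ).toEquiv.trans ((Pi.basisFun ℤ (Fin n)).constr ℤ).symm.toEquiv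

instance finite_hom (n : ℕ) (B : Type*) [AddCommGroup B] [Finite B] :
    Finite ((Fin n → ℤ) →+ B) := Finite.of_equiv _ (homEquiv n B).symm

lemma card_hom (n : ℕ) (B : Type*) [AddCommGroup B] [Finite B] :
    Nat.card ((Fin n → ℤ) →+ B) = Nat.card B ^ n := by
  rw [Nat.card_congr (homEquiv n B), Nat.card_fun]; simp

lemma tsum_const_nat {α : Type*} [Finite α] (c : ℝ≥0∞) : ∑' _ : α, c = (Nat.card α : ℝ≥0∞) * c := by
  rw [ENNReal.tsum_const, ENat.card_eq_coe_natCard]; simp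

lemma numSur_congr {B B' A : Type*} [AddCommGroup B] [AddCommGroup B'] [AddCommGroup A]
    (e : B ≃+ B') : numSur B A = numSur B' A := by
  refine Nat.card_congr ⟨fun f => ⟨f.1.comp e.symm.toAddMonoidHom, f.2.comp e.symm.surjective⟩,
    fun f => ⟨f.1.comp e.toAddMonoidHom, f.2.comp e.surjective⟩, ?_, ?_⟩
  · intro f; ext x; simp
  · intro f; ext x; simp

lemma numAut_ne_zero (A : Type*) [AddCommGroup A] [Finite A] : numAut A ≠ 0 := by
  have : Finite (A ≃+ A) := Finite.of_injective (fun e : A ≃+ A => (e : A → A)) DFunLike.coe_injective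
  have : Nonempty (A ≃+ A) := ⟨AddEquiv.refl A⟩
  exact Nat.card_pos.ne'

/-- Kernel map from surjections onto the standard groups. -/
noncomputable def kerMap {p : ℕ} (M : Type*) [AddCommGroup M] :
    (Σ lam : Multiset ℕ+, Sur M (CLGroup p lam)) → PSub p M := fun d =>
  ⟨d.2.1.ker, _, by
    rw [← CL_card d.1, AddSubgroup.index_ker, AddMonoidHom.range_eq_top.2 d.2.2]
    simp⟩

/-- Isomorphisms from the quotient give elements of the fibre. -/
noncomputable def fibMap {p : ℕ} {M : Type*} [AddCommGroup M] (L : PSub p M) (lam : Multiset ℕ+) :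
    ((M ⧸ L.1) ≃+ CLGroup p lam) → {d // kerMap (p := p) M d = L} := fun σ =>
  ⟨⟨lam, ⟨σ.toAddMonoidHom.comp (QuotientAddGroup.mk' L.1),
    σ.surjective.comp (QuotientAddGroup.mk'_surjective _)⟩⟩, by
      apply Subtype.ext
      show (σ.toAddMonoidHom.comp (QuotientAddGroup.mk' L.1)).ker = L.1
      ext x
      simp⟩

lemma fibMap_bij {p : ℕ} (hp : p.Prime) {M : Type*} [AddCommGroup M] (L : PSub p M)
    (lam : Multiset ℕ+) (e : (M ⧸ L.1) ≃+ CLGroup p lam) :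
    Function.Bijective (fibMap L lam) := by
  constructor
  · intro σ τ h
    have h := congrArg Subtype.val h
    simp only [fibMap, Sigma.mk.injEq, heq_eq_eq, true_and] at h
    ext x
    obtain ⟨x, rfl⟩ := QuotientAddGroup.mk_surjective x
    exact DFunLike.congr_fun (congrArg Subtype.val h) x
  · rintro ⟨⟨mu, f, hf⟩, h⟩
    have hk : f.ker = L.1 := congrArg Subtype.val h
    let σ : (M ⧸ L.1) ≃+ CLGroup p mu :=
      (QuotientAddGroup.quotientAddEquivOfEq hk.symm).trans
        (QuotientAddGroup.quotientKerEquivOfSurjective f hf)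
    obtain rfl : lam = mu := CL_unique hp (e.symm.trans σ)
    refine ⟨σ, Subtype.ext ?_⟩
    simp only [fibMap, Sigma.mk.injEq, heq_eq_eq, true_and]
    ext x
    rfl

lemma sum_lam {p : ℕ} (hp : p.Prime) (n : ℕ) (A : Type*) [AddCommGroup A] :
    ∑' lam : Multiset ℕ+, (numSur (CLGroup p lam) A : ℝ≥0∞) * (numAut (CLGroup p lam) : ℝ≥0∞)⁻¹ *
      ((numSur (Fin n → ℤ) (CLGroup p lam) : ℝ≥0∞) * ((Nat.card (CLGroup p lam) : ℝ≥0∞) ^ n)⁻¹)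
    = ∑' L : PSub p (Fin n → ℤ), (numSur ((Fin n → ℤ) ⧸ L.1) A : ℝ≥0∞) *
        ((L.1.index : ℝ≥0∞) ^ n)⁻¹ := by
  have : NeZero p := ⟨hp.ne_zero⟩
  let w : Multiset ℕ+ → ℝ≥0∞ := fun lam => (numSur (CLGroup p lam) A : ℝ≥0∞) *
    (numAut (CLGroup p lam) : ℝ≥0∞)⁻¹ * ((Nat.card (CLGroup p lam) : ℝ≥0∞) ^ n)⁻¹
  calc _ = ∑' lam : Multiset ℕ+, ∑' _ : Sur (Fin n → ℤ) (CLGroup p lam), w lam := by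
        refine tsum_congr fun lam => ?_
        rw [tsum_const_nat]
        show _ = (numSur (Fin n → ℤ) (CLGroup p lam) : ℝ≥0∞) * _
        simp only [w]
        ring
    _ = ∑' d : (Σ lam : Multiset ℕ+, Sur (Fin n → ℤ) (CLGroup p lam)), w d.1 := by
        rw [ENNReal.tsum_sigma']
    _ = ∑' L : PSub p (Fin n → ℤ), ∑' d : {d // kerMap (p := p) (Fin n → ℤ) d = L}, w d.1.1 := by
        rw [← (Equiv.sigmaFiberEquiv (kerMap (p := p) (Fin n → ℤ))).tsum_eq, ENNReal.tsum_sigma']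
        rfl
    _ = _ := by
        refine tsum_congr fun L => ?_
        obtain ⟨lam, ⟨e⟩⟩ := CL_exists hp ((Fin n → ℤ) ⧸ L.1) L.2
        rw [← (Equiv.ofBijective _ (fibMap_bij hp L lam e)).tsum_eq]
        have hc : Nat.card (((Fin n → ℤ) ⧸ L.1) ≃+ CLGroup p lam) = numAut (CLGroup p lam) :=
          Nat.card_congr ⟨fun σ => e.symm.trans σ, fun τ => e.trans τ, fun σ => by ext; simp,
            fun τ => by ext; simp⟩
        have h0 := numAut_ne_zero (CLGroup p lam)
        have : Finite (((Fin n → ℤ) ⧸ L.1) ≃+ CLGroup p lam) :=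
          Nat.finite_of_card_ne_zero (hc ▸ h0)
        show ∑' _ : (((Fin n → ℤ) ⧸ L.1) ≃+ CLGroup p lam), w lam = _
        rw [tsum_const_nat, hc, numSur_congr e]
        have hidx : L.1.index = Nat.card (CLGroup p lam) := Nat.card_congr e.toEquiv
        rw [hidx]
        simp only [w]
        rw [← mul_assoc, mul_comm (numSur (CLGroup p lam) A : ℝ≥0∞), ← mul_assoc,
          ENNReal.mul_inv_cancel (by exact_mod_cast h0) (by finiteness), one_mul]

lemma numSur_quot {M A : Type*} [AddCommGroup M] [AddCommGroup A] (L : AddSubgroup M) :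
    numSur (M ⧸ L) A = Nat.card {φ : Sur M A // L ≤ φ.1.ker} := by
  refine Nat.card_congr ⟨fun f => ⟨⟨f.1.comp (QuotientAddGroup.mk' L),
      f.2.comp (QuotientAddGroup.mk'_surjective _)⟩, ?_⟩,
    fun φ => ⟨QuotientAddGroup.lift L φ.1.1 φ.2, ?_⟩, ?_, ?_⟩
  · intro x hx
    rw [AddMonoidHom.mem_ker]
    simp [(QuotientAddGroup.eq_zero_iff x).2 hx]
  · intro a
    obtain ⟨x, hx⟩ := φ.1.2 a
    exact ⟨(x : M ⧸ L), by simpa using hx⟩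
  · intro f
    ext x
    simp
  · intro f
    ext x
    simp

lemma sum_below {p : ℕ} (hp : p.Prime) {M : Type*} [AddCommGroup M] (K : PSub p M) (n : ℕ) :
    ∑' L : {L : PSub p M // L.1 ≤ K.1}, ((L.1.1.index : ℝ≥0∞) ^ n)⁻¹ =
      ((K.1.index : ℝ≥0∞) ^ n)⁻¹ * zf p K.1 n := by
  obtain ⟨K, m, hK⟩ := K
  simp only
  have h0 : (K.index : ℝ≥0∞) ≠ 0 := by
    rw [hK]; push_cast; exact pow_ne_zero _ (by exact_mod_cast hp.ne_zero)
  let F : PSub p K → {L : PSub p M // L.1 ≤ K} := fun L =>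
    ⟨⟨L.1.map K.subtype, by
      obtain ⟨k, hk⟩ := L.2
      exact ⟨k + m, by rw [AddSubgroup.index_map_subtype, hk, hK, pow_add]⟩⟩,
      AddSubgroup.map_subtype_le _⟩
  have hF : Function.Bijective F := by
    constructor
    · intro L L' h
      have h : L.1.map K.subtype = L'.1.map K.subtype := congrArg (fun z => z.1.1) h
      exact Subtype.ext (AddSubgroup.map_injective K.subtype_injective h)
    · rintro ⟨⟨L, k, hk⟩, hL⟩
      have h1 : (L.addSubgroupOf K).map K.subtype = L := by
        rw [AddSubgroup.addSubgroupOf_map_subtype]; exact inf_eq_left.2 hL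
      have h2 : ∃ j, (L.addSubgroupOf K).index = p ^ j := by
        have := AddSubgroup.index_map_subtype (L.addSubgroupOf K)
        rw [h1, hk] at this
        obtain ⟨j, -, hj⟩ := (Nat.dvd_prime_pow hp).1 (Dvd.intro _ this.symm)
        exact ⟨j, hj⟩
      exact ⟨⟨_, h2⟩, Subtype.ext (Subtype.ext h1)⟩
  rw [← (Equiv.ofBijective F hF).tsum_eq, zf, ← ENNReal.tsum_mul_left]
  refine tsum_congr fun L => ?_
  show ((((L.1.map K.subtype).index : ℕ) : ℝ≥0∞) ^ n)⁻¹ = _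
  rw [AddSubgroup.index_map_subtype, Nat.cast_mul, mul_pow,
    ENNReal.mul_inv (by right; finiteness) (by right; exact pow_ne_zero _ h0), mul_comm]

lemma finIndex_equiv (n : ℕ) (K : AddSubgroup (Fin n → ℤ)) (hK : K.index ≠ 0) :
    Nonempty (K ≃+ (Fin n → ℤ)) := by
  have : K.FiniteIndex := ⟨hK⟩
  have h := AddSubgroup.finrank_eq_of_finiteIndex K
  have : Module.Free ℤ K := inferInstanceAs (Module.Free ℤ (AddSubgroup.toIntSubmodule K))
  have : Module.Finite ℤ K := inferInstanceAs (Module.Finite ℤ (AddSubgroup.toIntSubmodule K))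
  exact ⟨(LinearEquiv.ofFinrankEq _ _ h).toAddEquiv⟩

lemma sum_sub {p : ℕ} (hp : p.Prime) (n : ℕ) (A : Type*) [AddCommGroup A]
    (hA : ∃ m, Nat.card A = p ^ m) :
    ∑' L : PSub p (Fin n → ℤ), (numSur ((Fin n → ℤ) ⧸ L.1) A : ℝ≥0∞) *
        ((L.1.index : ℝ≥0∞) ^ n)⁻¹ =
      (numSur (Fin n → ℤ) A : ℝ≥0∞) * ((Nat.card A : ℝ≥0∞) ^ n)⁻¹ * zf p (Fin n → ℤ) n := by
  have : Finite A := by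
    obtain ⟨m, hm⟩ := hA
    exact Nat.finite_of_card_ne_zero (by rw [hm]; exact pow_ne_zero _ hp.ne_zero)
  have hker : ∀ φ : Sur (Fin n → ℤ) A, φ.1.ker.index = Nat.card A := fun φ => by
    rw [AddSubgroup.index_ker, AddMonoidHom.range_eq_top.2 φ.2]
    simp
  calc _ = ∑' (L : PSub p (Fin n → ℤ)) (φ : Sur (Fin n → ℤ) A),
        if L.1 ≤ φ.1.ker then ((L.1.index : ℝ≥0∞) ^ n)⁻¹ else 0 := by
        refine tsum_congr fun L => ?_
        rw [numSur_quot, ← tsum_const_nat]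
        exact tsum_subtype {φ : Sur (Fin n → ℤ) A | L.1 ≤ φ.1.ker} (fun _ => ((L.1.index : ℝ≥0∞) ^ n)⁻¹)
    _ = ∑' (φ : Sur (Fin n → ℤ) A) (L : PSub p (Fin n → ℤ)),
        if L.1 ≤ φ.1.ker then ((L.1.index : ℝ≥0∞) ^ n)⁻¹ else 0 := ENNReal.tsum_comm
    _ = ∑' (φ : Sur (Fin n → ℤ) A), ((Nat.card A : ℝ≥0∞) ^ n)⁻¹ * zf p (Fin n → ℤ) n := by
        refine tsum_congr fun φ => ?_
        have hi : ∃ m, φ.1.ker.index = p ^ m := by rw [hker]; exact hA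
        have h1 := sum_below hp (⟨φ.1.ker, hi⟩ : PSub p (Fin n → ℤ)) n
        have h2 := tsum_subtype {L : PSub p (Fin n → ℤ) | L.1 ≤ φ.1.ker} (fun L => ((L.1.index : ℝ≥0∞) ^ n)⁻¹)
        simp only at h1
        obtain ⟨e⟩ := finIndex_equiv n φ.1.ker (by rw [hker]; exact Nat.card_pos.ne')
        rw [hker, zf_congr p e] at h1
        rw [← h1]
        exact h2.symm
    _ = _ := by
        rw [tsum_const_nat, mul_assoc]
        rfl

open Filter Topology in
lemma tendsto_tsum_mono {α : Type*} (f : ℕ → α → ℝ≥0∞) (F : α → ℝ≥0∞) (hm : ∀ a, Monotone fun n => f n a)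
    (hl : ∀ a, Tendsto (fun n => f n a) atTop (𝓝 (F a))) :
    Tendsto (fun n => ∑' a, f n a) atTop (𝓝 (∑' a, F a)) := by
  let _ : MeasurableSpace α := ⊤
  have h := MeasureTheory.lintegral_tendsto_of_tendsto_of_monotone (μ := MeasureTheory.Measure.count)
    (f := f) (F := F) (fun n => Measurable.aemeasurable fun _ _ => trivial)
    (Filter.Eventually.of_forall hm) (Filter.Eventually.of_forall hl)
  have hc : ∀ g : α → ℝ≥0∞, ∫⁻ a, g a ∂MeasureTheory.Measure.count = ∑' a, g a := fun g =>
    MeasureTheory.lintegral_count' (fun _ _ => trivial)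
  simpa only [hc] using h

/-- Probability that `n` random elements generate. -/
noncomputable def gp (n : ℕ) (B : Type*) [AddCommGroup B] : ℝ≥0∞ :=
  (numSur (Fin n → ℤ) B : ℝ≥0∞) * ((Nat.card B : ℝ≥0∞) ^ n)⁻¹

/-- Extend a surjection by one generator. -/
noncomputable def extSur {n : ℕ} {B : Type*} [AddCommGroup B] (d : Sur (Fin n → ℤ) B × B) :
    Sur (Fin (n + 1) → ℤ) B :=
  ⟨{ toFun := fun v => d.1.1 (Fin.tail v) + v 0 • d.2
     map_zero' := by
      have : Fin.tail (0 : Fin (n + 1) → ℤ) = 0 := rfl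
      simp [this]
     map_add' := fun v w => by
      have : Fin.tail (v + w) = Fin.tail v + Fin.tail w := rfl
      rw [this, map_add, Pi.add_apply, add_smul]; abel }, fun b => by
      obtain ⟨w, hw⟩ := d.1.2 b
      exact ⟨Fin.cons 0 w, by simp [hw]⟩⟩

lemma extSur_apply {n : ℕ} {B : Type*} [AddCommGroup B] (d : Sur (Fin n → ℤ) B × B)
    (v : Fin (n + 1) → ℤ) : (extSur d).1 v = d.1.1 (Fin.tail v) + v 0 • d.2 := rfl

lemma extSur_inj {n : ℕ} {B : Type*} [AddCommGroup B] :
    Function.Injective (extSur (n := n) (B := B)) := by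
  rintro ⟨f, b⟩ ⟨f', b'⟩ h
  have h : ∀ v, (extSur (f, b)).1 v = (extSur (f', b')).1 v := fun v => by rw [h]
  have h1 : f = f' := by
    apply Subtype.ext
    apply AddMonoidHom.ext
    intro w
    have := h (Fin.cons 0 w)
    simpa [extSur_apply] using this
  have h2 : b = b' := by
    have := h (Fin.cons 1 0)
    simpa [extSur_apply] using this
  rw [h1, h2]

lemma gp_mono (B : Type*) [AddCommGroup B] [Finite B] : Monotone fun n => gp n B := by
  refine monotone_nat_of_le_succ fun n => ?_
  have h : numSur (Fin n → ℤ) B * Nat.card B ≤ numSur (Fin (n + 1) → ℤ) B := by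
    unfold numSur
    rw [← Nat.card_prod]
    exact Nat.card_le_card_of_injective _ (extSur_inj (n := n) (B := B))
  have h0 : (Nat.card B : ℝ≥0∞) ≠ 0 := by exact_mod_cast Nat.card_pos.ne'
  unfold gp
  calc (numSur (Fin n → ℤ) B : ℝ≥0∞) * ((Nat.card B : ℝ≥0∞) ^ n)⁻¹
      = ((numSur (Fin n → ℤ) B * Nat.card B : ℕ) : ℝ≥0∞) * ((Nat.card B : ℝ≥0∞) ^ (n + 1))⁻¹ := by
        rw [pow_succ', ENNReal.mul_inv (by left; exact h0) (by left; finiteness), Nat.cast_mul,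
          mul_assoc, ← mul_assoc (Nat.card B : ℝ≥0∞), ENNReal.mul_inv_cancel h0 (by finiteness), one_mul]
    _ ≤ _ := by gcongr

lemma gp_le_one (n : ℕ) (B : Type*) [AddCommGroup B] [Finite B] : gp n B ≤ 1 := by
  have h : numSur (Fin n → ℤ) B ≤ Nat.card B ^ n := by
    rw [← card_hom]
    exact Nat.card_le_card_of_injective _ Subtype.val_injective
  unfold gp
  rw [← div_eq_mul_inv]
  apply ENNReal.div_le_of_le_mul
  rw [one_mul]
  exact_mod_cast h

lemma gp_ge (n : ℕ) (B : Type*) [AddCommGroup B] [Finite B] :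
    1 ≤ gp n B + (Nat.card {H : AddSubgroup B // H ≠ ⊤} : ℝ≥0∞) * (2⁻¹) ^ n := by
  let F : Sur (Fin n → ℤ) B ⊕ (Σ H : {H : AddSubgroup B // H ≠ ⊤}, ((Fin n → ℤ) →+ H.1)) →
      ((Fin n → ℤ) →+ B) := Sum.elim Subtype.val (fun d => d.1.1.subtype.comp d.2)
  have hF : Function.Surjective F := by
    intro f
    by_cases hf : Function.Surjective f
    · exact ⟨Sum.inl ⟨f, hf⟩, rfl⟩
    · refine ⟨Sum.inr ⟨⟨f.range, fun h => hf (AddMonoidHom.range_eq_top.1 h)⟩, f.rangeRestrict⟩, ?_⟩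
      ext; rfl
  have : Fintype {H : AddSubgroup B // H ≠ ⊤} := Fintype.ofFinite _
  have h1 := Nat.card_le_card_of_surjective F hF
  rw [card_hom, Nat.card_sum, Nat.card_sigma] at h1
  simp_rw [card_hom] at h1
  have h2 : ∀ H : {H : AddSubgroup B // H ≠ ⊤}, 2 * Nat.card H.1 ≤ Nat.card B := by
    rintro ⟨H, hH⟩
    rw [← AddSubgroup.card_mul_index H, mul_comm]
    gcongr
    have := AddSubgroup.index_ne_zero_of_finite (H := H)
    have := mt AddSubgroup.index_eq_one.1 hH
    omega
  have hb : (Nat.card B : ℝ≥0∞) ≠ 0 := by exact_mod_cast Nat.card_pos.ne'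
  have h3 : ∀ H : {H : AddSubgroup B // H ≠ ⊤}, (Nat.card H.1 : ℝ≥0∞) ≤ 2⁻¹ * Nat.card B := by
    intro H
    rw [mul_comm, ← div_eq_mul_inv, ENNReal.le_div_iff_mul_le (by simp) (by simp), mul_comm]
    exact_mod_cast h2 H
  have h4 : ((Nat.card B : ℝ≥0∞)) ^ n ≤ (numSur (Fin n → ℤ) B : ℝ≥0∞) +
      (Nat.card {H : AddSubgroup B // H ≠ ⊤} : ℝ≥0∞) * (2⁻¹ * (Nat.card B : ℝ≥0∞)) ^ n := by
    calc ((Nat.card B : ℝ≥0∞)) ^ n ≤ (numSur (Fin n → ℤ) B : ℝ≥0∞) +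
          ∑ H : {H : AddSubgroup B // H ≠ ⊤}, (Nat.card H.1 : ℝ≥0∞) ^ n := by
          exact_mod_cast h1
      _ ≤ _ := by
          gcongr
          calc _ ≤ ∑ H : {H : AddSubgroup B // H ≠ ⊤}, (2⁻¹ * (Nat.card B : ℝ≥0∞)) ^ n :=
                Finset.sum_le_sum fun H _ => by gcongr; exact h3 H
            _ = _ := by simp
  have hbn : (Nat.card B : ℝ≥0∞) ^ n ≠ 0 := pow_ne_zero _ hb
  have hbt : (Nat.card B : ℝ≥0∞) ^ n ≠ ∞ := by finiteness
  calc (1 : ℝ≥0∞) = (Nat.card B : ℝ≥0∞) ^ n * ((Nat.card B : ℝ≥0∞) ^ n)⁻¹ :=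
        (ENNReal.mul_inv_cancel hbn hbt).symm
    _ ≤ _ := mul_le_mul_left h4 _
    _ = _ := by
      rw [add_mul, mul_pow, mul_assoc, mul_assoc, ENNReal.mul_inv_cancel hbn hbt, mul_one]
      rfl

open Filter Topology in
lemma gp_tendsto (B : Type*) [AddCommGroup B] [Finite B] :
    Tendsto (fun n => gp n B) atTop (𝓝 1) := by
  set N : ℝ≥0∞ := (Nat.card {H : AddSubgroup B // H ≠ ⊤} : ℝ≥0∞) with hN
  have h1 : Tendsto (fun n : ℕ => 1 - N * (2⁻¹) ^ n) atTop (𝓝 (1 - N * 0)) := by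
    refine ENNReal.Tendsto.sub tendsto_const_nhds ?_ (by simp)
    refine ENNReal.Tendsto.const_mul ?_ (by right; simp [hN])
    exact ENNReal.tendsto_pow_atTop_nhds_zero_of_lt_one (by simp [ENNReal.inv_lt_one])
  rw [mul_zero, tsub_zero] at h1
  refine tendsto_of_tendsto_of_tendsto_of_le_of_le h1 tendsto_const_nhds (fun n => ?_)
    (fun n => gp_le_one n B)
  exact tsub_le_iff_right.2 (gp_ge n B)

lemma clProd_eq (p : ℕ) : clProd p 0 = ∏' k : ℕ, (1 + -((p : ℝ)⁻¹ ^ (k + 1))) := by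
  unfold clProd
  refine tprod_congr fun k => ?_
  rw [← sub_eq_add_neg, zpow_neg, inv_pow]
  norm_cast

lemma pinv_lt {p : ℕ} (hp : p.Prime) (k : ℕ) : (p : ℝ)⁻¹ ^ (k + 1) < 1 := by
  have h1 : (1 : ℝ) < p := by exact_mod_cast hp.one_lt
  exact pow_lt_one₀ (by positivity) (inv_lt_one_of_one_lt₀ h1) (by omega)

lemma cl_summable {p : ℕ} (hp : p.Prime) : Summable fun k : ℕ => ‖-((p : ℝ)⁻¹ ^ (k + 1))‖ := by
  have h1 : (1 : ℝ) < p := by exact_mod_cast hp.one_lt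
  simp only [norm_neg, norm_pow, norm_inv, Real.norm_natCast]
  exact (summable_nat_add_iff 1).2 (summable_geometric_of_lt_one (by positivity) (inv_lt_one_of_one_lt₀ h1))

lemma clProd_ne_zero {p : ℕ} (hp : p.Prime) : clProd p 0 ≠ 0 := by
  rw [clProd_eq]
  refine tprod_one_add_ne_zero_of_summable (fun k => ?_) (cl_summable hp)
  have := pinv_lt hp k
  linarith

open Filter Topology in
lemma clProd_tendsto {p : ℕ} (hp : p.Prime) :
    Tendsto (fun n => ∏ i ∈ Finset.range n, (1 + -((p : ℝ)⁻¹ ^ (i + 1)))) atTop (𝓝 (clProd p 0)) := by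
  rw [clProd_eq]
  exact (multipliable_one_add_of_summable (cl_summable hp)).hasProd.tendsto_prod_nat

lemma clProd_nonneg {p : ℕ} (hp : p.Prime) : 0 ≤ clProd p 0 := by
  refine ge_of_tendsto' (clProd_tendsto hp) fun n => Finset.prod_nonneg fun i _ => ?_
  have := pinv_lt hp i
  linarith

open Filter Topology in
lemma zf_tendsto {p : ℕ} (hp : p.Prime) :
    Tendsto (fun n => zf p (Fin n → ℤ) n) atTop (𝓝 (ENNReal.ofReal (clProd p 0)⁻¹)) := by
  have h := ENNReal.tendsto_ofReal ((clProd_tendsto hp).inv₀ (clProd_ne_zero hp))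
  refine h.congr fun n => ?_
  rw [zf_pi hp, ← Finset.prod_inv_distrib, ENNReal.ofReal_prod_of_nonneg]
  · refine Finset.prod_congr rfl fun i _ => ?_
    have := pinv_lt hp i
    have hp0 : (0 : ℝ) < p := by exact_mod_cast hp.pos
    rw [ENNReal.ofReal_inv_of_pos (by linarith), ← sub_eq_add_neg,
      ENNReal.ofReal_sub _ (by positivity), ENNReal.ofReal_pow (by positivity),
      ENNReal.ofReal_inv_of_pos hp0]
    simp
  · intro i _
    have := pinv_lt hp i
    exact inv_nonneg.2 (by linarith)

open Filter Topology in
lemma cl_moment {p : ℕ} (hp : p.Prime) (A : Type*) [AddCommGroup A] (hA : ∃ m, Nat.card A = p ^ m) :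
    ∑' lam : Multiset ℕ+, (numSur (CLGroup p lam) A : ℝ≥0∞) * (numAut (CLGroup p lam) : ℝ≥0∞)⁻¹ =
      ENNReal.ofReal (clProd p 0)⁻¹ := by
  have : NeZero p := ⟨hp.ne_zero⟩
  have : Finite A := by
    obtain ⟨m, hm⟩ := hA
    exact Nat.finite_of_card_ne_zero (by rw [hm]; exact pow_ne_zero _ hp.ne_zero)
  have hc : ∀ lam : Multiset ℕ+,
      (numSur (CLGroup p lam) A : ℝ≥0∞) * (numAut (CLGroup p lam) : ℝ≥0∞)⁻¹ ≠ ∞ := fun lam => by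
    have h0 : (numAut (CLGroup p lam) : ℝ≥0∞) ≠ 0 := by exact_mod_cast numAut_ne_zero _
    finiteness
  have h1 := tendsto_tsum_mono (fun n lam => (numSur (CLGroup p lam) A : ℝ≥0∞) *
      (numAut (CLGroup p lam) : ℝ≥0∞)⁻¹ * gp n (CLGroup p lam))
    (fun lam => (numSur (CLGroup p lam) A : ℝ≥0∞) * (numAut (CLGroup p lam) : ℝ≥0∞)⁻¹)
    (fun lam n m h => mul_le_mul_right (gp_mono (CLGroup p lam) h) _)
    (fun lam => by
      simpa using ENNReal.Tendsto.const_mul (gp_tendsto (CLGroup p lam)) (Or.inr (hc lam)))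
  have h2 : Tendsto (fun n => gp n A * zf p (Fin n → ℤ) n) atTop
      (𝓝 (1 * ENNReal.ofReal (clProd p 0)⁻¹)) :=
    ENNReal.Tendsto.mul (gp_tendsto A) (Or.inl one_ne_zero) (zf_tendsto hp) (Or.inr (by simp))
  rw [one_mul] at h2
  refine tendsto_nhds_unique h1 (h2.congr fun n => ?_)
  unfold gp
  rw [sum_lam hp n A, sum_sub hp n A hA]

lemma card_fiber {B A : Type*} [AddCommGroup B] [AddCommGroup A] (f : B →+ A)
    (hf : Function.Surjective f) (a : A) : Nat.card {b // f b = a} * Nat.card A = Nat.card B := by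
  obtain ⟨b0, rfl⟩ := hf a
  have e : {b // f b = f b0} ≃ f.ker :=
    ⟨fun b => ⟨b.1 - b0, by rw [AddMonoidHom.mem_ker, map_sub, b.2, sub_self]⟩,
     fun k => ⟨k.1 + b0, by rw [map_add, AddMonoidHom.mem_ker.1 k.2, zero_add]⟩,
     fun b => by simp, fun k => by simp⟩
  rw [Nat.card_congr e, ← AddSubgroup.card_mul_index f.ker, AddSubgroup.index_ker,
    AddMonoidHom.range_eq_top.2 hf]
  simp

lemma sum_pointed {B A : Type*} [AddCommGroup B] [AddCommGroup A] [Finite B] [Finite A] (a : A) :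
    (∑' b : B, (numPointedSur B b A a : ℝ)) * Nat.card A = numSur B A * Nat.card B := by
  have : Fintype B := Fintype.ofFinite B
  have : Finite (B →+ A) := Finite.of_injective (fun f : B →+ A => (f : B → A)) DFunLike.coe_injective
  have : Fintype (Sur B A) := Fintype.ofFinite _
  rw [tsum_fintype]
  have e : (Σ b : B, {f : B →+ A // Function.Surjective f ∧ f b = a}) ≃
      (Σ f : Sur B A, {b // f.1 b = a}) :=
    ⟨fun d => ⟨⟨d.2.1, d.2.2.1⟩, ⟨d.1, d.2.2.2⟩⟩, fun d => ⟨d.2.1, ⟨d.1.1, d.1.2, d.2.2⟩⟩,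
      fun d => rfl, fun d => rfl⟩
  have h := Nat.card_congr e
  rw [Nat.card_sigma, Nat.card_sigma] at h
  have h2 : (∑ f : Sur B A, Nat.card {b // f.1 b = a}) * Nat.card A = numSur B A * Nat.card B := by
    rw [Finset.sum_mul, Finset.sum_congr rfl fun f _ => card_fiber f.1 f.2 a, Finset.sum_const,
      smul_eq_mul, Finset.card_univ, ← Nat.card_eq_fintype_card (α := Sur B A)]
    rfl
  rw [← h] at h2
  unfold numPointedSur
  exact_mod_cast h2

/-- Pointed moments: for every finite abelian `p`-group `A` and every `a ∈ A`,
`∑_B (μ^0(B)/|B|) ∑_{b ∈ B} |Sur((B,b),(A,a))| = 1/|A|`, where the outer sum runs over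
isomorphism classes of finite abelian `p`-groups `B`. -/
theorem cl_pointed_moments (p : ℕ) (hp : p.Prime) (hodd : Odd p)
    (A : Type) [AddCommGroup A] (hA : ∃ n : ℕ, Nat.card A = p ^ n) (a : A) :
    ∑' lam : Multiset ℕ+,
      (clMeasure p 0 (CLGroup p lam) / (Nat.card (CLGroup p lam) : ℝ)) *
        ∑' b : CLGroup p lam, (numPointedSur (CLGroup p lam) b A a : ℝ)
      = (Nat.card A : ℝ)⁻¹ := by
  have : NeZero p := ⟨hp.ne_zero⟩
  have : Finite A := by
    obtain ⟨m, hm⟩ := hA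
    exact Nat.finite_of_card_ne_zero (by rw [hm]; exact pow_ne_zero _ hp.ne_zero)
  have hA0 : (Nat.card A : ℝ) ≠ 0 := by exact_mod_cast Nat.card_pos.ne'
  have hterm : ∀ lam : Multiset ℕ+,
      (clMeasure p 0 (CLGroup p lam) / (Nat.card (CLGroup p lam) : ℝ)) *
        ∑' b : CLGroup p lam, (numPointedSur (CLGroup p lam) b A a : ℝ) =
      (clProd p 0 * (Nat.card A : ℝ)⁻¹) *
        ((numSur (CLGroup p lam) A : ℝ≥0∞) * (numAut (CLGroup p lam) : ℝ≥0∞)⁻¹).toReal := by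
    intro lam
    have h1 := sum_pointed (B := CLGroup p lam) (A := A) a
    have hB : (Nat.card (CLGroup p lam) : ℝ) ≠ 0 := by exact_mod_cast Nat.card_pos.ne'
    rw [eq_div_of_mul_eq hA0 h1, ENNReal.toReal_mul, ENNReal.toReal_inv, ENNReal.toReal_natCast,
      ENNReal.toReal_natCast]
    unfold clMeasure
    field_simp
  rw [tsum_congr hterm, tsum_mul_left, ← ENNReal.tsum_toReal_eq, cl_moment hp A hA,
    ENNReal.toReal_ofReal (inv_nonneg.2 (clProd_nonneg hp))]
  · have := clProd_ne_zero hp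
    field_simp
  · intro lam
    have h0 : (numAut (CLGroup p lam) : ℝ≥0∞) ≠ 0 := by exact_mod_cast numAut_ne_zero _
    finiteness
end
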